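/- Let φ : 𝔻³ → 𝔻³ be holomorphic and C²-smooth on the closed tridisc. Then the composition operator C_φ is bounded on the classical Bergman space A²(𝔻³) if and only if φ satisfies both: (1) for every ζ ∈ 𝕋³ with φ(ζ) ∈ 𝕋³, the 3×3 complex Jacobian matrix d_ζφ is invertible; and (2) for every pair 1 ≤ i_1 < i_2 ≤ 3 and every ζ ∈ 𝕋³ with (φ_{i_1}(ζ), φ_{i_2}(ζ)) ∈ 𝕋², either (a) the complex gradients ∇φ_{i_1}(ζ) and ∇φ_{i_2}(ζ) are linearly independent over ℂ, or (b) ∂φ_{i_k}/∂z_j(ζ) ≠ 0 for all j = 1,2,3 and k = 1,2. -/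

import Mathlib

open MeasureTheory Metric Set ENNReal

noncomputable section

/-- The open unit polydisc in `ℂⁿ`. -/
def polydisc (n : ℕ) : Set (Fin n → ℂ) := {z | ∀ j, ‖z j‖ < 1}

/-- The closed unit polydisc in `ℂⁿ`. -/
def closedPolydisc (n : ℕ) : Set (Fin n → ℂ) := {z | ∀ j, ‖z j‖ ≤ 1}

/-- The distinguished boundary (torus) of the polydisc. -/
def torus (n : ℕ) : Set (Fin n → ℂ) := {z | ∀ j, ‖z j‖ = 1}

/-- The weighted Bergman measure `V_β` on the polydisc: the product of the measures
`dA_β(z) = (β+1)(1-|z|²)^β dA(z)`, where `dA` is normalized area measure on the unit disc. -/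
def Vbeta (n : ℕ) (β : ℝ) : Measure (Fin n → ℂ) :=
  (volume.restrict (polydisc n)).withDensity
    (fun z => ENNReal.ofReal (∏ j, ((β + 1) * (1 - ‖z j‖ ^ 2) ^ β / Real.pi)))

/-- The `(i,j)` entry `∂Φ_i/∂z_j(ζ)` of the complex Jacobian matrix of `Φ` at `ζ`
(computed via the derivative of the extension to the closed polydisc). -/
def jacEntry (n : ℕ) (Φ : (Fin n → ℂ) → (Fin n → ℂ)) (ζ : Fin n → ℂ) (i j : Fin n) : ℂ :=
  fderivWithin ℝ Φ (closedPolydisc n) ζ (Pi.single j 1) i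

/-- The composition operator `C_Φ` is bounded on the weighted Bergman space `A²_β(𝔻ⁿ)`. -/
def bddBergman (n : ℕ) (β : ℝ) (Φ : (Fin n → ℂ) → (Fin n → ℂ)) : Prop :=
  ∃ C > (0:ℝ), ∀ f : (Fin n → ℂ) → ℂ, DifferentiableOn ℂ f (polydisc n) →
    ∫⁻ z, ENNReal.ofReal (‖f (Φ z)‖ ^ 2) ∂(Vbeta n β) ≤
      ENNReal.ofReal C * ∫⁻ z, ENNReal.ofReal (‖f z‖ ^ 2) ∂(Vbeta n β)

section
lemma aux_schwarz_pick (g : ℂ → ℂ) (hd : DifferentiableOn ℂ g (ball 0 1))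
    (hb : ∀ z ∈ ball (0:ℂ) 1, ‖g z‖ < 1) (r : ℝ) (hr0 : 0 ≤ r) (hr : r < 1) :
    (1 - r) * (1 - ‖g 0‖) ≤ 4 * (1 - ‖g r‖) := by
  set b := g 0 with hbdef
  have hb0 : ‖b‖ < 1 := hb 0 (by simp)
  have hden : ∀ z ∈ ball (0:ℂ) 1, 1 - (starRingEnd ℂ) b * g z ≠ 0 := by
    intro z hz h
    have h1 : (starRingEnd ℂ) b * g z = 1 := (sub_eq_zero.1 h).symm
    have h2 := congrArg norm h1
    rw [norm_mul, RCLike.norm_conj, norm_one] at h2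
    nlinarith [hb z hz, norm_nonneg b, norm_nonneg (g z)]
  have key : ∀ w : ℂ, ‖1 - (starRingEnd ℂ) b * w‖^2 - ‖w - b‖^2 = (1 - ‖b‖^2) * (1 - ‖w‖^2) := by
    intro w
    simp only [Complex.sq_norm, Complex.normSq_apply]
    simp
    ring
  have hq : ∀ z ∈ ball (0:ℂ) 1, ‖(g z - b) / (1 - (starRingEnd ℂ) b * g z)‖ < 1 := by
    intro z hz
    have := key (g z)
    have hp : 0 < ‖1 - (starRingEnd ℂ) b * g z‖ := norm_pos_iff.2 (hden z hz)
    rw [norm_div, div_lt_one hp]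
    have h3 : 0 < (1 - ‖b‖^2) * (1 - ‖g z‖^2) := by
      apply _root_.mul_pos <;> nlinarith [hb z hz, norm_nonneg b, norm_nonneg (g z)]
    nlinarith [norm_nonneg (g z - b)]
  have hrb : (r:ℂ) ∈ ball (0:ℂ) 1 := by simp [abs_of_nonneg hr0, hr]
  have hs := Complex.norm_le_norm_of_mapsTo_ball (f := fun z => (g z - b) / (1 - (starRingEnd ℂ) b * g z)) (R := 1) (z := (r:ℂ))
    (by
      apply DifferentiableOn.div
      · exact hd.sub_const _
      · exact (differentiableOn_const _).sub ((differentiableOn_const _).mul hd)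
      · exact hden)
    (by intro z hz; simpa using (hq z hz).le) (by simp [hbdef]) (by simpa using hrb)
  have hp : 0 < ‖1 - (starRingEnd ℂ) b * g r‖ := norm_pos_iff.2 (hden r hrb)
  rw [norm_div, div_le_iff₀ hp, Complex.norm_real, Real.norm_of_nonneg hr0] at hs
  have hk := key (g r)
  have hgr := hb r hrb
  have hlow : 1 - ‖b‖ ≤ ‖1 - (starRingEnd ℂ) b * g r‖ := by
    have := norm_sub_norm_le (1:ℂ) ((starRingEnd ℂ) b * g r)
    rw [norm_one, norm_mul, RCLike.norm_conj] at this
    nlinarith [norm_nonneg b, norm_nonneg (g r)]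
  set X := ‖1 - (starRingEnd ℂ) b * g r‖
  set Y := ‖g r - b‖
  have hY : 0 ≤ Y := norm_nonneg _
  have h5 : Y^2 ≤ r^2 * X^2 := by
    have : Y^2 ≤ (r*X)^2 := pow_le_pow_left₀ hY hs 2
    nlinarith
  have h6 : (1 - r^2) * X^2 ≤ (1 - ‖b‖^2) * (1 - ‖g r‖^2) := by nlinarith
  have h7 : (1 - r^2) * (1-‖b‖)^2 ≤ (1 - r^2) * X^2 := by
    apply mul_le_mul_of_nonneg_left _ (by nlinarith)
    exact pow_le_pow_left₀ (by linarith) hlow 2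
  have h8 : (1 - r^2) * (1-‖b‖) ≤ (1 + ‖b‖) * (1 - ‖g r‖^2) := by
    have : (1-‖b‖) * ((1 - r^2) * (1-‖b‖)) ≤ (1-‖b‖) * ((1 + ‖b‖) * (1 - ‖g r‖^2)) := by nlinarith
    exact le_of_mul_le_mul_left this (by linarith)
  have h9 : (1 + ‖b‖) * (1 - ‖g r‖^2) ≤ 4 * (1 - ‖g r‖) := by
    have : (1+‖b‖) * (1 + ‖g r‖) ≤ 4 := by nlinarith [norm_nonneg b, norm_nonneg (g r)]
    nlinarith
  have h10 : (1-r) * (1-‖b‖) ≤ (1-r^2) * (1-‖b‖) := by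
    apply mul_le_mul_of_nonneg_right _ (by linarith)
    nlinarith
  linarith

lemma aux_max (g : ℂ → ℂ) (hc : ContinuousOn g (closedBall 0 1))
    (hd : DifferentiableOn ℂ g (ball 0 1)) (hb : ∀ z ∈ closedBall (0:ℂ) 1, ‖g z‖ ≤ 1)
    (z₀ : ℂ) (hz₀ : z₀ ∈ ball (0:ℂ) 1) (h0 : ‖g z₀‖ = 1) :
    ∀ z ∈ closedBall (0:ℂ) 1, g z = g z₀ := by
  have hcl : closure (ball (0:ℂ) 1) = closedBall 0 1 := closure_ball _ one_ne_zero
  have := Complex.eqOn_closure_of_isPreconnected_of_isMaxOn_norm (f := g) (U := ball 0 1) (c := z₀)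
    (convex_ball _ _).isPreconnected isOpen_ball ⟨hd, by rwa [hcl]⟩ hz₀
    (by intro z hz; simp only [mem_ofPred_eq, Function.comp, h0]; exact hb z (ball_subset_closedBall hz))
  intro z hz
  exact this (by rwa [hcl])

lemma aux_hopf (g : ℂ → ℂ) (hc : ContinuousOn g (closedBall 0 1))
    (hd : DifferentiableOn ℂ g (ball 0 1)) (hb : ∀ z ∈ closedBall (0:ℂ) 1, ‖g z‖ ≤ 1)
    (hder : ∀ ε > (0:ℝ), ∃ r : ℝ, 0 ≤ r ∧ r < 1 ∧ 1 - ‖g r‖ ≤ ε * (1 - r)) :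
    ∀ z ∈ closedBall (0:ℂ) 1, g z = g 1 := by
  by_cases h : ∃ z₀ ∈ ball (0:ℂ) 1, ‖g z₀‖ = 1
  · obtain ⟨z₀, hz₀, h0⟩ := h
    have := aux_max g hc hd hb z₀ hz₀ h0
    intro z hz
    rw [this z hz, this 1 (by simp)]
  · exfalso
    push Not at h
    have hb' : ∀ z ∈ ball (0:ℂ) 1, ‖g z‖ < 1 := fun z hz =>
      lt_of_le_of_ne (hb z (ball_subset_closedBall hz)) (h z hz)
    have h0 : 0 < 1 - ‖g 0‖ := by linarith [hb' 0 (by simp)]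
    obtain ⟨r, hr0, hr1, hr⟩ := hder ((1 - ‖g 0‖)/8) (by linarith)
    have := aux_schwarz_pick g hd hb' r hr0 hr1
    nlinarith

/-- a holomorphic function with real values is constant -/
lemma aux_real_const (g : ℂ → ℂ) (hd : DifferentiableOn ℂ g (ball 0 1))
    (hr : ∀ z ∈ ball (0:ℂ) 1, (g z).im = 0) : ∀ z ∈ ball (0:ℂ) 1, ∀ w ∈ ball (0:ℂ) 1, g z = g w := by
  intro z hz w hw
  refine IsOpen.is_const_of_deriv_eq_zero isOpen_ball (convex_ball (0:ℂ) 1).isPreconnected hd ?_ hz hw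
  intro x hx
  have hx' : HasDerivAt g (deriv g x) x := (hd.differentiableAt (isOpen_ball.mem_nhds hx)).hasDerivAt
  have hR : ∀ v : ℂ, ((v * deriv g x)).im = 0 := by
    intro v
    have hline : HasDerivAt (fun t : ℝ => x + t * v) v 0 := by
      have := ((Complex.ofRealCLM.hasDerivAt (x := (0:ℝ))).mul_const v).const_add x
      simpa using this
    have hc : HasDerivAt (fun t : ℝ => g (x + t * v)) (deriv g x * v) 0 := by
      have hx'' : HasDerivAt g (deriv g x) (x + ((0:ℝ):ℂ) * v) := by simpa using hx'
      exact hx''.comp (0:ℝ) hline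
    have him : HasDerivAt (fun t : ℝ => (g (x + t * v)).im) ((deriv g x * v).im) 0 :=
      Complex.imCLM.hasFDerivAt.comp_hasDerivAt (0:ℝ) hc
    have h0 : HasDerivAt (fun t : ℝ => (g (x + t * v)).im) 0 0 := by
      apply (hasDerivAt_const (0:ℝ) (0:ℝ)).congr_of_eventuallyEq
      have : ∀ᶠ t : ℝ in nhds 0, x + t * v ∈ ball (0:ℂ) 1 := by
        apply hline.continuousAt
        simpa using isOpen_ball.mem_nhds hx
      filter_upwards [this] with t ht
      exact hr _ ht
    rw [mul_comm]
    exact him.unique h0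
  have h1 := hR 1
  have h2 := hR Complex.I
  simp at h1 h2
  exact Complex.ext h2 h1

end

section
/-- the standing assumptions -/
structure Good (φ : (Fin 3 → ℂ) → (Fin 3 → ℂ)) : Prop where
  hol : DifferentiableOn ℂ φ (polydisc 3)
  sm : ContDiffOn ℝ 2 φ (closedPolydisc 3)
  map : ∀ z ∈ polydisc 3, φ z ∈ polydisc 3

lemma polydisc_eq : polydisc 3 = ball (0 : Fin 3 → ℂ) 1 := by
  ext z
  simp [polydisc, pi_norm_lt_iff]

lemma closedPolydisc_eq : closedPolydisc 3 = closedBall (0 : Fin 3 → ℂ) 1 := by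
  ext z
  simp [closedPolydisc, pi_norm_le_iff_of_nonneg]

lemma closure_polydisc : closure (polydisc 3) = closedPolydisc 3 := by
  rw [polydisc_eq, closedPolydisc_eq, closure_ball _ one_ne_zero]

lemma isOpen_polydisc : IsOpen (polydisc 3) := by rw [polydisc_eq]; exact isOpen_ball
lemma isCompact_cpd : IsCompact (closedPolydisc 3) := by
  rw [closedPolydisc_eq]; exact isCompact_closedBall _ _
lemma convex_cpd : Convex ℝ (closedPolydisc 3) := by
  rw [closedPolydisc_eq]; exact convex_closedBall _ _
lemma pd_subset : polydisc 3 ⊆ closedPolydisc 3 := by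
  rw [polydisc_eq, closedPolydisc_eq]; exact ball_subset_closedBall
lemma uniqueDiff_cpd : UniqueDiffOn ℝ (closedPolydisc 3) := by
  apply uniqueDiffOn_convex convex_cpd
  rw [closedPolydisc_eq, interior_closedBall _ one_ne_zero]
  exact ⟨0, by simp⟩
lemma torus_subset : torus 3 ⊆ closedPolydisc 3 := fun _ hz j => (hz j).le

/-- the derivative -/
def DD (φ : (Fin 3 → ℂ) → (Fin 3 → ℂ)) (x : Fin 3 → ℂ) : (Fin 3 → ℂ) →L[ℝ] (Fin 3 → ℂ) :=
  fderivWithin ℝ φ (closedPolydisc 3) x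

lemma jac_def (φ : (Fin 3 → ℂ) → (Fin 3 → ℂ)) (x : Fin 3 → ℂ) (i j : Fin 3) :
    jacEntry 3 φ x i j = DD φ x (Pi.single j 1) i := rfl

namespace Good
variable {φ : (Fin 3 → ℂ) → (Fin 3 → ℂ)}

lemma hasD (h : Good φ) {x : Fin 3 → ℂ} (hx : x ∈ closedPolydisc 3) :
    HasFDerivWithinAt φ (DD φ x) (closedPolydisc 3) x :=
  (h.sm.differentiableOn (by norm_num) x hx).hasFDerivWithinAt

lemma contD (h : Good φ) : ContinuousOn (DD φ) (closedPolydisc 3) :=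
  h.sm.continuousOn_fderivWithin uniqueDiff_cpd (by norm_num)

lemma cont (h : Good φ) : ContinuousOn φ (closedPolydisc 3) := h.sm.continuousOn

lemma mapc (h : Good φ) {x : Fin 3 → ℂ} (hx : x ∈ closedPolydisc 3) : φ x ∈ closedPolydisc 3 := by
  rw [← closure_polydisc] at hx ⊢
  have : MapsTo φ (polydisc 3) (polydisc 3) := h.map
  exact this.closure_of_continuousOn (h.cont.mono (closure_polydisc.subset)) hx

lemma D_smul (h : Good φ) {x : Fin 3 → ℂ} (hx : x ∈ closedPolydisc 3) (c : ℂ) (v : Fin 3 → ℂ) :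
    DD φ x (c • v) = c • DD φ x v := by
  have hcl : ∀ y ∈ polydisc 3, DD φ y (c • v) = c • DD φ y v := by
    intro y hy
    have hn : closedPolydisc 3 ∈ nhds y := Filter.mem_of_superset (isOpen_polydisc.mem_nhds hy) pd_subset
    have h1 : HasFDerivAt φ (DD φ y) y := (h.hasD (pd_subset hy)).hasFDerivAt hn
    have h2 := ((h.hol y hy).differentiableAt (isOpen_polydisc.mem_nhds hy)).hasFDerivAt
    have h3 := h1.unique (h2.restrictScalars ℝ)
    rw [h3]; simp
  have hx' : x ∈ closure (polydisc 3) := by rwa [closure_polydisc]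
  have hcont : ContinuousOn (fun y => DD φ y (c • v) - c • DD φ y v) (closure (polydisc 3)) := by
    rw [closure_polydisc]
    exact (h.contD.clm_apply continuousOn_const).sub ((h.contD.clm_apply continuousOn_const).const_smul c)
  have hm : MapsTo (fun y => DD φ y (c • v) - c • DD φ y v) (polydisc 3) {0} := fun y hy => by simp [hcl y hy]
  have := hm.closure_of_continuousOn hcont hx'
  simpa [sub_eq_zero] using this

lemma D_apply (h : Good φ) {x : Fin 3 → ℂ} (hx : x ∈ closedPolydisc 3) (v : Fin 3 → ℂ) (i : Fin 3) :
    DD φ x v i = ∑ j, jacEntry 3 φ x i j * v j := by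
  have hv : v = ∑ j, v j • (Pi.single j (1:ℂ) : Fin 3 → ℂ) := by
    ext k; simp [Finset.sum_apply, Pi.single_apply]
  conv_lhs => rw [hv]
  rw [map_sum, Finset.sum_apply]
  refine Finset.sum_congr rfl fun j _ => ?_
  rw [h.D_smul hx, Pi.smul_apply, smul_eq_mul, mul_comm, jac_def]

lemma jac_cont (h : Good φ) (i j : Fin 3) : ContinuousOn (fun x => jacEntry 3 φ x i j) (closedPolydisc 3) := by
  simp only [jac_def]
  exact (continuous_apply i).comp_continuousOn (h.contD.clm_apply continuousOn_const)

/-- uniform differentiability -/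
lemma unif (h : Good φ) {ε : ℝ} (hε : 0 < ε) : ∃ δ > 0, ∀ z ∈ closedPolydisc 3, ∀ x ∈ closedPolydisc 3,
    ∀ y ∈ closedPolydisc 3, ‖x - z‖ < δ → ‖y - z‖ < δ → ‖φ y - φ x - DD φ z (y - x)‖ ≤ ε * ‖y - x‖ := by
  have hu := isCompact_cpd.uniformContinuousOn_of_continuous h.contD
  rw [Metric.uniformContinuousOn_iff] at hu
  obtain ⟨δ, hδ, H⟩ := hu ε hε
  refine ⟨δ, hδ, fun z hz x hx y hy hxz hyz => ?_⟩
  refine Convex.norm_image_sub_le_of_norm_hasFDerivWithin_le' (𝕜 := ℝ) (s := closedPolydisc 3 ∩ ball z δ) (f' := DD φ)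
    ?_ ?_ (convex_cpd.inter (convex_ball _ _)) ⟨hx, by simpa [dist_eq_norm] using hxz⟩ ⟨hy, by simpa [dist_eq_norm] using hyz⟩
  · intro w hw
    exact (h.hasD hw.1).mono inter_subset_left
  · intro w hw
    rw [← dist_eq_norm]
    exact (H w hw.1 z hz hw.2).le

/-- slices along affine discs -/
lemma slice_cont (h : Good φ) (i : Fin 3) (p q : Fin 3 → ℂ)
    (hpq : ∀ l ∈ closedBall (0:ℂ) 1, p + l • q ∈ closedPolydisc 3) :
    ContinuousOn (fun l : ℂ => φ (p + l • q) i) (closedBall 0 1) := by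
  refine (continuous_apply i).comp_continuousOn (h.cont.comp ?_ hpq)
  fun_prop

lemma slice_diff (h : Good φ) (i : Fin 3) (p q : Fin 3 → ℂ)
    (hpq : ∀ l ∈ closedBall (0:ℂ) 1, p + l • q ∈ closedPolydisc 3) :
    DifferentiableOn ℂ (fun l : ℂ => φ (p + l • q) i) (ball 0 1) := by
  intro l hl
  apply DifferentiableAt.differentiableWithinAt
  have hx := hpq l (ball_subset_closedBall hl)
  have h0 := h.hasD hx
  have hline : HasFDerivAt (fun l : ℂ => p + l • q) ((ContinuousLinearMap.id ℝ ℂ).smulRight q) l := by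
    exact ((ContinuousLinearMap.id ℝ ℂ).smulRight q).hasFDerivAt.const_add p
  have h1 : HasFDerivWithinAt (fun l : ℂ => φ (p + l • q)) ((DD φ (p + l • q)).comp ((ContinuousLinearMap.id ℝ ℂ).smulRight q)) (ball 0 1) l :=
    h0.comp l hline.hasFDerivWithinAt (fun m hm => hpq m (ball_subset_closedBall hm))
  have h2 := h1.hasFDerivAt (isOpen_ball.mem_nhds hl)
  have h3 := (hasFDerivAt_pi'.1 h2) i
  have h4 : HasFDerivAt (𝕜 := ℂ) (fun l : ℂ => φ (p + l • q) i)
      ((ContinuousLinearMap.id ℂ ℂ).smulRight (DD φ (p + l • q) q i)) l := by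
    apply hasFDerivAt_of_restrictScalars ℝ h3
    ext
    simp [h.D_smul hx]
  exact h4.differentiableAt

end Good

end

section
namespace Good
variable {φ : (Fin 3 → ℂ) → (Fin 3 → ℂ)}

lemma update_mem {x : Fin 3 → ℂ} (hx : x ∈ closedPolydisc 3) (j : Fin 3) {l : ℂ} (hl : ‖l‖ ≤ 1) :
    Function.update x j l ∈ closedPolydisc 3 := by
  intro k
  by_cases hk : k = j
  · subst hk; simpa using hl
  · simpa [hk] using hx k

lemma update_sub_single (x : Fin 3 → ℂ) (j : Fin 3) (l : ℂ) :
    Function.update x j l - x = Pi.single j (l - x j) := by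
  ext k
  by_cases hk : k = j
  · subst hk; simp
  · simp [hk]

lemma norm_single (j : Fin 3) (c : ℂ) : ‖(Pi.single j c : Fin 3 → ℂ)‖ = ‖c‖ := Pi.norm_single _

lemma D_single (h : Good φ) {x : Fin 3 → ℂ} (hx : x ∈ closedPolydisc 3) (i j : Fin 3) (c : ℂ) :
    DD φ x (Pi.single j c) i = jacEntry 3 φ x i j * c := by
  rw [h.D_apply hx]
  simp [Pi.single_apply]

lemma unif_comp (h : Good φ) {ε : ℝ} (hε : 0 < ε) : ∃ δ > 0, ∀ x ∈ closedPolydisc 3,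
    ∀ y ∈ closedPolydisc 3, ‖y - x‖ < δ → ∀ i, ‖φ y i - φ x i - DD φ x (y - x) i‖ ≤ ε * ‖y - x‖ := by
  obtain ⟨δ, hδ, H⟩ := h.unif hε
  refine ⟨δ, hδ, fun x hx y hy hxy i => ?_⟩
  have := H x hx x hx y hy (by simpa using hδ) hxy
  exact (norm_le_pi_norm (φ y - φ x - DD φ x (y - x)) i).trans this

lemma dir_nonpos (h : Good φ) {z : Fin 3 → ℂ} (hz : z ∈ closedPolydisc 3) {i : Fin 3}
    (hi : ‖φ z i‖ = 1) (v : Fin 3 → ℂ) (s₀ : ℝ) (hs₀ : 0 < s₀)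
    (hv : ∀ s : ℝ, 0 < s → s < s₀ → z + s • v ∈ closedPolydisc 3) :
    ((starRingEnd ℂ) (φ z i) * DD φ z v i).re ≤ 0 := by
  by_contra hcon
  push Not at hcon
  set a := ((starRingEnd ℂ) (φ z i) * DD φ z v i).re with ha
  obtain ⟨δ, hδ, H⟩ := h.unif_comp (ε := a / (2 * (‖v‖ + 1))) (by positivity)
  set s := min (s₀ / 2) (δ / (2 * (‖v‖ + 1))) with hs
  have hspos : 0 < s := by positivity
  have hs1 : s < s₀ := lt_of_le_of_lt (min_le_left _ _) (by linarith)
  have hs2 : s * ‖v‖ < δ := by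
    have h1 : s * (2 * (‖v‖ + 1)) ≤ δ := (le_div_iff₀ (by positivity)).1 (min_le_right _ _)
    nlinarith [norm_nonneg v]
  have hy := hv s hspos hs1
  have hns : ‖z + s • v - z‖ = s * ‖v‖ := by
    rw [add_sub_cancel_left, norm_smul, Real.norm_of_nonneg hspos.le]
  have h1 := H z hz _ hy (by rw [hns]; exact hs2) i
  rw [hns, add_sub_cancel_left, map_smul, Pi.smul_apply] at h1
  have h2 : ‖φ (z + s • v) i‖ ≤ 1 := h.mapc hy i
  set w := φ (z + s • v) i
  set e := w - φ z i - s • DD φ z v i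
  have he : (starRingEnd ℂ) (φ z i) * w = (starRingEnd ℂ) (φ z i) * φ z i + s * ((starRingEnd ℂ) (φ z i) * DD φ z v i) + (starRingEnd ℂ) (φ z i) * e := by
    simp only [e, Complex.real_smul]; ring
  have he2 := congrArg Complex.re he
  rw [Complex.add_re, Complex.add_re, Complex.re_ofReal_mul, ← ha, ← Complex.normSq_eq_conj_mul_self, Complex.normSq_eq_norm_sq, hi] at he2
  have h3 : ((starRingEnd ℂ) (φ z i) * w).re ≤ 1 := by
    refine (Complex.re_le_norm _).trans ?_
    rw [norm_mul, RCLike.norm_conj, hi]; linarith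
  have h4 : -‖e‖ ≤ ((starRingEnd ℂ) (φ z i) * e).re := by
    have := Complex.abs_re_le_norm ((starRingEnd ℂ) (φ z i) * e)
    rw [norm_mul, RCLike.norm_conj, hi, one_mul] at this
    exact (abs_le.1 this).1
  have h5 : a / (2 * (‖v‖ + 1)) * (s * ‖v‖) < s * a := by
    rw [div_mul_eq_mul_div, div_lt_iff₀ (by positivity)]
    have : 0 < a * s := by positivity
    nlinarith [norm_nonneg v]
  rw [Complex.ofReal_re, one_pow] at he2
  linarith

lemma bd_nonneg (h : Good φ) {z : Fin 3 → ℂ} (hz : z ∈ closedPolydisc 3) {i k : Fin 3}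
    (hi : ‖φ z i‖ = 1) (hk : ‖z k‖ = 1) :
    ∃ a : ℝ, 0 ≤ a ∧ (starRingEnd ℂ) (φ z i) * jacEntry 3 φ z i k * z k = a := by
  set A := (starRingEnd ℂ) (φ z i) * jacEntry 3 φ z i k * z k with hA
  have key : ∀ t : ℝ, 0 ≤ (A * (1 + t * Complex.I)).re := by
    intro t
    have := h.dir_nonpos hz hi (Pi.single k (-(z k * (1 + t * Complex.I)))) (2 / (1 + t^2)) (by positivity) ?_
    · rw [h.D_single hz] at this
      have e : (starRingEnd ℂ) (φ z i) * (jacEntry 3 φ z i k * -(z k * (1 + t * Complex.I))) = -(A * (1 + t * Complex.I)) := by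
        rw [hA]; ring
      rw [e, Complex.neg_re] at this
      linarith
    · intro s hs hs2
      have e : z + s • (Pi.single k (-(z k * (1 + t * Complex.I))) : Fin 3 → ℂ) = Function.update z k (z k * (1 - s * (1 + t * Complex.I))) := by
        ext m
        by_cases hm : m = k
        · subst hm; simp; ring
        · simp [hm]
      rw [e]
      apply update_mem hz
      rw [norm_mul, hk, one_mul]
      have : ‖(1 - s * (1 + t * Complex.I) : ℂ)‖ ^ 2 ≤ 1 := by
        rw [Complex.sq_norm, Complex.normSq_apply]
        simp
        rw [lt_div_iff₀ (by positivity)] at hs2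
        nlinarith
      nlinarith [norm_nonneg (1 - s * (1 + t * Complex.I) : ℂ)]
  have key' : ∀ t : ℝ, 0 ≤ A.re - t * A.im := by
    intro t
    have := key t
    simp at this
    linarith
  have him : A.im = 0 := by
    by_contra hne
    have := key' ((A.re + 1) / A.im)
    rw [div_mul_cancel₀ _ hne] at this
    linarith
  refine ⟨A.re, by simpa using key' 0, ?_⟩
  exact Complex.ext (by simp) (by simp [him])

lemma hopf_slice (h : Good φ) (i : Fin 3) (p q : Fin 3 → ℂ)
    (hpq : ∀ l ∈ closedBall (0:ℂ) 1, p + l • q ∈ closedPolydisc 3)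
    (h1 : ‖φ (p + q) i‖ = 1) (hD : DD φ (p + q) q i = 0) :
    ∀ l ∈ closedBall (0:ℂ) 1, φ (p + l • q) i = φ (p + q) i := by
  have hz : p + q ∈ closedPolydisc 3 := by simpa using hpq 1 (by simp)
  have := aux_hopf (fun l => φ (p + l • q) i) (h.slice_cont i p q hpq) (h.slice_diff i p q hpq)
    (fun l hl => h.mapc (hpq l hl) i) ?_
  · intro l hl; simpa using this l hl
  · intro ε hε
    obtain ⟨δ, hδ, H⟩ := h.unif_comp (ε := ε / (‖q‖ + 1)) (by positivity)
    set s := min 1 (δ / (2 * (‖q‖ + 1))) with hs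
    have hspos : 0 < s := by positivity
    have hs2 : s * ‖q‖ < δ := by
      have h1 : s * (2 * (‖q‖ + 1)) ≤ δ := (le_div_iff₀ (by positivity)).1 (min_le_right _ _)
      nlinarith [norm_nonneg q]
    have hs1 : s ≤ 1 := min_le_left _ _
    refine ⟨1 - s, by linarith, by linarith, ?_⟩
    have hy := hpq ((1 - s : ℝ) : ℂ) (by
      rw [mem_closedBall_zero_iff, Complex.norm_real, Real.norm_of_nonneg (by linarith)]; linarith)
    have e : p + ((1 - s : ℝ) : ℂ) • q - (p + q) = -(s • q) := by
      ext m; simp; ring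
    have hn : ‖-(s • q)‖ = s * ‖q‖ := by rw [norm_neg, norm_smul, Real.norm_of_nonneg hspos.le]
    have h2 := H _ hz _ hy (by rw [e, hn]; exact hs2) i
    rw [e, hn, map_neg, map_smul, Pi.neg_apply, Pi.smul_apply, hD, smul_zero, neg_zero, sub_zero] at h2
    have h3 := norm_sub_norm_le (φ (p + q) i) (φ (p + ((1 - s : ℝ) : ℂ) • q) i)
    rw [norm_sub_rev, h1] at h3
    have h4 : ε / (‖q‖ + 1) * (s * ‖q‖) ≤ ε * s := by
      rw [div_mul_eq_mul_div, div_le_iff₀ (by positivity)]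
      have : 0 < ε * s := by positivity
      nlinarith [norm_nonneg q]
    have : (1 - (1 - s)) = s := by ring
    rw [this]
    linarith

lemma grad_ne (h : Good φ) {z : Fin 3 → ℂ} (hz : z ∈ closedPolydisc 3) {i : Fin 3}
    (hi : ‖φ z i‖ = 1) : ∃ j, jacEntry 3 φ z i j ≠ 0 := by
  by_contra hcon
  push Not at hcon
  have := h.hopf_slice i 0 z (by
    intro l hl k
    simp only [Pi.add_apply, Pi.zero_apply, Pi.smul_apply, zero_add, smul_eq_mul, norm_mul]
    have := hz k
    rw [mem_closedBall_zero_iff] at hl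
    exact mul_le_one₀ hl (norm_nonneg _) this) (by simpa using hi)
    (by rw [zero_add, h.D_apply hz]; simp [hcon]) 0 (by simp)
  have h2 := h.map 0 (by intro k; simp) i
  simp at this
  rw [this, hi] at h2
  exact lt_irrefl _ h2

lemma const_update (h : Good φ) {z : Fin 3 → ℂ} (hz : z ∈ closedPolydisc 3) {i j : Fin 3}
    (hi : ‖φ z i‖ = 1) (hj : ‖z j‖ < 1 ∨ jacEntry 3 φ z i j = 0) {l : ℂ} (hl : ‖l‖ ≤ 1) :
    φ (Function.update z j l) i = φ z i := by
  have hupd : ∀ c m : ℂ, Function.update z j 0 + m • (Pi.single j c : Fin 3 → ℂ) = Function.update z j (m * c) := by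
    intro c m
    ext k
    by_cases hk : k = j
    · subst hk; simp
    · simp [hk]
  by_cases hj1 : ‖z j‖ < 1
  · have hpq : ∀ l ∈ closedBall (0:ℂ) 1, Function.update z j 0 + l • (Pi.single j 1 : Fin 3 → ℂ) ∈ closedPolydisc 3 := by
      intro l hl
      rw [hupd]
      exact update_mem hz _ (by simpa using hl)
    have := aux_max _ (h.slice_cont i _ _ hpq) (h.slice_diff i _ _ hpq)
      (fun l hl => h.mapc (hpq l hl) i) (z j) (by simpa using hj1) (by simp only [hupd]; simpa using hi) l (by simpa using hl)
    simpa [hupd] using this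
  · have hz1 : ‖z j‖ = 1 := le_antisymm (hz j) (not_lt.1 hj1)
    have hJ : jacEntry 3 φ z i j = 0 := hj.resolve_left hj1
    have hne : z j ≠ 0 := by intro h0; rw [h0] at hz1; simp at hz1
    have e1 : Function.update z j 0 + (Pi.single j (z j) : Fin 3 → ℂ) = z := by
      have := hupd (z j) 1
      simpa using this
    have := h.hopf_slice i (Function.update z j 0) (Pi.single j (z j)) (by
      intro l hl
      rw [hupd]
      exact update_mem hz _ (by simpa [hz1] using hl)) (by rw [e1]; exact hi) (by rw [e1, h.D_single hz, hJ, zero_mul])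
      (l / z j) (by simpa [hz1] using hl)
    rw [hupd, e1, div_mul_cancel₀ _ hne] at this
    exact this

lemma jac_zero (h : Good φ) {z : Fin 3 → ℂ} (hz : z ∈ closedPolydisc 3) {i j : Fin 3}
    (hc : ∀ l : ℂ, ‖l‖ ≤ 1 → φ (Function.update z j l) i = φ z i) : jacEntry 3 φ z i j = 0 := by
  obtain ⟨w, hw, hwne⟩ : ∃ w : ℂ, ‖w‖ ≤ 1 ∧ w - z j ≠ 0 := by
    by_cases h0 : z j = 0
    · exact ⟨1, by simp, by simp [h0]⟩
    · exact ⟨0, by simp, by simpa using h0⟩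
  by_contra hne
  have hJ : 0 < ‖jacEntry 3 φ z i j‖ := norm_pos_iff.2 hne
  have hW : 0 < ‖w - z j‖ := norm_pos_iff.2 hwne
  obtain ⟨δ, hδ, H⟩ := h.unif_comp (ε := ‖jacEntry 3 φ z i j‖ / 2) (by positivity)
  set s := min 1 (δ / (2 * ‖w - z j‖)) with hs
  have hspos : 0 < s := by positivity
  have hs1 : s ≤ 1 := min_le_left _ _
  have hs2 : s * ‖w - z j‖ < δ := by
    have h1 : s * (2 * ‖w - z j‖) ≤ δ := (le_div_iff₀ (by positivity)).1 (min_le_right _ _)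
    nlinarith
  have hl : ‖z j + s * (w - z j)‖ ≤ 1 := by
    have e : z j + s * (w - z j) = ((1 - s : ℝ):ℂ) * z j + (s:ℂ) * w := by push_cast; ring
    rw [e]
    refine (norm_add_le _ _).trans ?_
    rw [norm_mul, norm_mul, Complex.norm_real, Complex.norm_real, Real.norm_of_nonneg hspos.le, Real.norm_of_nonneg (by linarith)]
    nlinarith [hz j]
  have hn : ‖Function.update z j (z j + s * (w - z j)) - z‖ = s * ‖w - z j‖ := by
    rw [update_sub_single, norm_single, add_sub_cancel_left, norm_mul, Complex.norm_real, Real.norm_of_nonneg hspos.le]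
  have h1 := H z hz _ (update_mem hz j hl) (by rw [hn]; exact hs2) i
  rw [hn, hc _ hl, update_sub_single, h.D_single hz, sub_self, zero_sub, norm_neg, norm_mul, add_sub_cancel_left, norm_mul, Complex.norm_real, Real.norm_of_nonneg hspos.le] at h1
  have : 0 < ‖jacEntry 3 φ z i j‖ * (s * ‖w - z j‖) := by positivity
  linarith

end Good

end

section
namespace Good
variable {φ : (Fin 3 → ℂ) → (Fin 3 → ℂ)}

lemma jac_update_diff (h : Good φ) {z : Fin 3 → ℂ} (hz : z ∈ closedPolydisc 3) {i j k : Fin 3}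
    (hkj : k ≠ j) (hk : ‖z k‖ = 1)
    (hc : ∀ l : ℂ, ‖l‖ ≤ 1 → φ (Function.update z j l) i = φ z i) :
    DifferentiableOn ℂ (fun l : ℂ => jacEntry 3 φ (Function.update z j l) i k) (ball 0 1) := by
  have hzk : z k ≠ 0 := by intro h0; rw [h0] at hk; simp at hk
  let c : ℕ → ℂ := fun n => z k * (1 - ((1 / ((n:ℝ) + 1) : ℝ) : ℂ))
  have hcn : ∀ n, ‖c n‖ ≤ 1 := by
    intro n
    have e : (1 - ((1 / ((n:ℝ) + 1) : ℝ) : ℂ)) = ((1 - 1 / ((n:ℝ) + 1) : ℝ) : ℂ) := by push_cast; ring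
    simp only [c]
    rw [norm_mul, hk, one_mul, e, Complex.norm_real]
    have h1 : 0 < 1 / ((n:ℝ) + 1) := by positivity
    have h2 : 1 / ((n:ℝ) + 1) ≤ 1 := by rw [div_le_one (by positivity)]; linarith [(Nat.cast_nonneg n : (0:ℝ) ≤ n)]
    rw [Real.norm_of_nonneg (by linarith)]; linarith
  have hupd : ∀ (n : ℕ) (l : ℂ), Function.update (Function.update z j 0) k (c n) + l • (Pi.single j 1 : Fin 3 → ℂ)
      = Function.update (Function.update z j l) k (c n) := by
    intro n l
    ext m
    by_cases hm : m = k
    · subst hm; simp [hkj]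
    · by_cases hmj : m = j
      · subst hmj; simp [hm]
      · simp [hm, hmj]
  let F : ℕ → ℂ → ℂ := fun n l => (φ (Function.update (Function.update z j 0) k (c n) + l • (Pi.single j 1 : Fin 3 → ℂ)) i - φ z i) / (c n - z k)
  have hF : ∀ n, DifferentiableOn ℂ (F n) (ball 0 1) := by
    intro n
    apply DifferentiableOn.div_const
    apply DifferentiableOn.sub_const
    apply h.slice_diff
    intro l hl
    rw [hupd]
    exact update_mem (update_mem hz j (by simpa using hl)) k (hcn n)
  have hlim : TendstoUniformlyOn F (fun l : ℂ => jacEntry 3 φ (Function.update z j l) i k) Filter.atTop (ball 0 1) := by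
    rw [Metric.tendstoUniformlyOn_iff]
    intro ε hε
    obtain ⟨δ, hδ, H⟩ := h.unif_comp (ε := ε / 2) (by positivity)
    obtain ⟨N, hN⟩ := exists_nat_one_div_lt hδ
    filter_upwards [Filter.eventually_ge_atTop N] with n hn l hl
    have hl' : ‖l‖ ≤ 1 := by simpa using (ball_subset_closedBall hl)
    have hx := update_mem hz j hl'
    have hxk : Function.update z j l k = z k := by simp [hkj]
    have hdiff : c n - z k = -(z k * ((1 / ((n:ℝ) + 1) : ℝ) : ℂ)) := by simp only [c]; ring
    have hpos : 0 < 1 / ((n:ℝ) + 1) := by positivity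
    have hnorm : ‖c n - z k‖ = 1 / ((n:ℝ) + 1) := by
      rw [hdiff, norm_neg, norm_mul, hk, one_mul, Complex.norm_real, Real.norm_of_nonneg hpos.le]
    have hlt : 1 / ((n:ℝ) + 1) < δ := by
      refine lt_of_le_of_lt ?_ hN
      apply one_div_le_one_div_of_le (by positivity)
      have : (N:ℝ) ≤ n := by exact_mod_cast hn
      linarith
    have hne : c n - z k ≠ 0 := by rw [← norm_pos_iff, hnorm]; exact hpos
    have h1 := H _ hx _ (update_mem hx k (hcn n)) (by
      rw [update_sub_single, norm_single, hxk, hnorm]; exact hlt) i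
    rw [update_sub_single, norm_single, hxk, h.D_single hx, hc l hl'] at h1
    rw [dist_comm, dist_eq_norm]
    have e : F n l - jacEntry 3 φ (Function.update z j l) i k =
        (φ (Function.update (Function.update z j l) k (c n)) i - φ z i - jacEntry 3 φ (Function.update z j l) i k * (c n - z k)) / (c n - z k) := by
      simp only [F]
      rw [hupd]
      field_simp
    rw [e, norm_div, div_lt_iff₀ (norm_pos_iff.2 hne)]
    have : 0 < ‖c n - z k‖ := norm_pos_iff.2 hne
    nlinarith
  exact hlim.tendstoLocallyUniformlyOn.differentiableOn (Filter.Eventually.of_forall hF) isOpen_ball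

lemma jac_update (h : Good φ) {z : Fin 3 → ℂ} (hz : z ∈ closedPolydisc 3) {i j : Fin 3}
    (hi : ‖φ z i‖ = 1)
    (hc : ∀ l : ℂ, ‖l‖ ≤ 1 → φ (Function.update z j l) i = φ z i) (k : Fin 3) {l : ℂ} (hl : ‖l‖ ≤ 1) :
    jacEntry 3 φ (Function.update z j l) i k = jacEntry 3 φ z i k := by
  have hiu : ∀ l : ℂ, ‖l‖ ≤ 1 → ‖φ (Function.update z j l) i‖ = 1 := fun l hl => by rw [hc l hl, hi]
  by_cases hkj : k = j
  · subst hkj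
    rw [h.jac_zero hz hc, h.jac_zero (update_mem hz k hl)]
    intro m hm
    rw [Function.update_idem, hc m hm, hc l hl]
  by_cases hk1 : ‖z k‖ < 1
  · rw [h.jac_zero hz (fun m hm => h.const_update hz hi (Or.inl hk1) hm),
      h.jac_zero (update_mem hz j hl) (fun m hm => h.const_update (update_mem hz j hl) (hiu l hl) (Or.inl (by simpa [hkj] using hk1)) hm)]
  have hk : ‖z k‖ = 1 := le_antisymm (hz k) (not_lt.1 hk1)
  have hzk : z k ≠ 0 := by intro h0; rw [h0] at hk; simp at hk
  have hφ : (starRingEnd ℂ) (φ z i) ≠ 0 := by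
    intro h0
    have := congrArg norm h0
    rw [RCLike.norm_conj, hi] at this
    simp at this
  set ψ : ℂ → ℂ := fun l => (starRingEnd ℂ) (φ z i) * jacEntry 3 φ (Function.update z j l) i k * z k with hψ
  have hψd : DifferentiableOn ℂ ψ (ball 0 1) :=
    ((h.jac_update_diff hz hkj hk hc).const_mul _).mul_const _
  have hψc : ContinuousOn ψ (closedBall 0 1) := by
    refine (continuousOn_const.mul ?_).mul continuousOn_const
    refine (h.jac_cont i k).comp (t := closedPolydisc 3) (f := fun l => Function.update z j l) ?_ ?_
    · exact (by fun_prop : Continuous fun l : ℂ => Function.update z j l).continuousOn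
    · intro l hl; exact update_mem hz j (by simpa using hl)
  have hreal : ∀ l ∈ ball (0:ℂ) 1, (ψ l).im = 0 := by
    intro l hl
    have hl' : ‖l‖ ≤ 1 := by simpa using (ball_subset_closedBall hl)
    obtain ⟨a, -, ha⟩ := h.bd_nonneg (update_mem hz j hl') (hiu l hl') (k := k) (by simpa [hkj] using hk)
    rw [hc l hl'] at ha
    simp only [ne_eq, hkj, not_false_eq_true, Function.update_of_ne] at ha
    simp only [hψ]
    rw [ha]; simp
  have hconst := aux_real_const ψ hψd hreal
  have hall : ∀ l ∈ closedBall (0:ℂ) 1, ψ l = ψ 0 := by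
    have hcl : closure (ball (0:ℂ) 1) = closedBall 0 1 := closure_ball _ one_ne_zero
    have hm : MapsTo (fun l => ψ l - ψ 0) (ball 0 1) {0} := by
      intro l hl
      simp [hconst l hl 0 (by simp)]
    have := hm.closure_of_continuousOn (by rw [hcl]; exact hψc.sub continuousOn_const)
    rw [hcl] at this
    intro l hl
    have := this hl
    simpa [sub_eq_zero] using this
  have h1 := hall l (by simpa using hl)
  have h2 := hall (z j) (by simpa using hz j)
  rw [← h2] at h1
  simp only [hψ, Function.update_eq_self] at h1
  exact mul_left_cancel₀ hφ (mul_right_cancel₀ hzk h1)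

lemma step_torus (h : Good φ) (j : Fin 3) {z : Fin 3 → ℂ} (hz : z ∈ closedPolydisc 3) :
    ∃ w ∈ closedPolydisc 3, ‖w j‖ = 1 ∧ (∀ k, ‖z k‖ = 1 → ‖w k‖ = 1) ∧
      ∀ i, ‖φ z i‖ = 1 → φ w i = φ z i ∧ ∀ k, jacEntry 3 φ w i k = jacEntry 3 φ z i k := by
  by_cases hj : ‖z j‖ < 1
  · refine ⟨Function.update z j 1, update_mem hz j (by simp), by simp, ?_, ?_⟩
    · intro k hk
      by_cases hkj : k = j
      · subst hkj; simp
      · simpa [hkj] using hk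
    · intro i hi
      have hc : ∀ l : ℂ, ‖l‖ ≤ 1 → φ (Function.update z j l) i = φ z i :=
        fun l hl => h.const_update hz hi (Or.inl hj) hl
      exact ⟨hc 1 (by simp), fun k => h.jac_update hz hi hc k (by simp)⟩
  · exact ⟨z, hz, le_antisymm (hz j) (not_lt.1 hj), fun k hk => hk, fun i _ => ⟨rfl, fun _ => rfl⟩⟩

lemma to_torus (h : Good φ) {z : Fin 3 → ℂ} (hz : z ∈ closedPolydisc 3) :
    ∃ w ∈ torus 3, ∀ i, ‖φ z i‖ = 1 → φ w i = φ z i ∧ ∀ k, jacEntry 3 φ w i k = jacEntry 3 φ z i k := by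
  obtain ⟨w0, hw0, a0, b0, c0⟩ := h.step_torus 0 hz
  obtain ⟨w1, hw1, a1, b1, c1⟩ := h.step_torus 1 hw0
  obtain ⟨w2, hw2, a2, b2, c2⟩ := h.step_torus 2 hw1
  refine ⟨w2, ?_, ?_⟩
  · intro k
    fin_cases k
    · exact b2 _ (b1 _ a0)
    · exact b2 _ a1
    · exact a2
  · intro i hi
    obtain ⟨e0, f0⟩ := c0 i hi
    obtain ⟨e1, f1⟩ := c1 i (by rw [e0, hi])
    obtain ⟨e2, f2⟩ := c2 i (by rw [e1, e0, hi])
    exact ⟨by rw [e2, e1, e0], fun k => by rw [f2, f1, f0]⟩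

end Good

end

section
lemma extend_step (R : Fin 3 → (Fin 3 → ℂ)) (s : Finset (Fin 3)) (i : Fin 3)
    (hR : LinearIndepOn ℂ R (s : Set (Fin 3))) :
    ∃ R' : Fin 3 → (Fin 3 → ℂ), (∀ k ∈ s, R' k = R k) ∧
      LinearIndepOn ℂ R' ((insert i s : Finset (Fin 3)) : Set (Fin 3)) := by
  by_cases hi : i ∈ s
  · exact ⟨R, fun _ _ => rfl, by rwa [Finset.insert_eq_of_mem hi]⟩
  have hlt : Submodule.span ℂ (R '' (s : Set (Fin 3))) < ⊤ := by
    have hcard : s.card < 3 := by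
      have : s ⊂ Finset.univ := Finset.ssubset_univ_iff.2 (fun h => hi (by rw [h]; simp))
      simpa using Finset.card_lt_card this
    classical
    have h1 := finrank_span_finset_le_card (R := ℂ) (s.image R)
    rw [Finset.coe_image] at h1
    have h2 : (s.image R).card ≤ s.card := Finset.card_image_le
    apply Submodule.lt_top_of_finrank_lt_finrank
    simp only [Module.finrank_fintype_fun_eq_card, Fintype.card_fin]
    exact lt_of_le_of_lt (h1.trans h2) hcard
  obtain ⟨v, -, hv⟩ := SetLike.exists_of_lt hlt
  have heq : ∀ k ∈ s, Function.update R i v k = R k := by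
    intro k hk
    have : k ≠ i := fun h => hi (h ▸ hk)
    simp [this]
  have heqon : EqOn (Function.update R i v) R (s : Set (Fin 3)) := fun k hk => heq k (by simpa using hk)
  refine ⟨Function.update R i v, heq, ?_⟩
  rw [Finset.coe_insert]
  apply LinearIndepOn.insert
  · exact hR.congr heqon.symm
  · rw [heqon.image_eq]
    simpa using hv

lemma extend_rows (R : Fin 3 → (Fin 3 → ℂ)) (s : Finset (Fin 3))
    (hR : LinearIndepOn ℂ R (s : Set (Fin 3))) :
    ∃ M : Matrix (Fin 3) (Fin 3) ℂ, (∀ k ∈ s, ∀ j, M k j = R k j) ∧ Function.Injective M.mulVec := by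
  obtain ⟨R0, e0, h0⟩ := extend_step R s 0 hR
  obtain ⟨R1, e1, h1⟩ := extend_step R0 _ 1 h0
  obtain ⟨R2, e2, h2⟩ := extend_step R1 _ 2 h1
  refine ⟨Matrix.of R2, ?_, ?_⟩
  · intro k hk j
    rw [Matrix.of_apply, e2 k (by simp [hk]), e1 k (by simp [hk]), e0 k hk]
  · rw [Matrix.mulVec_injective_iff_isUnit, ← Matrix.linearIndependent_rows_iff_isUnit]
    have : ((insert 2 (insert 1 (insert 0 s)) : Finset (Fin 3)) : Set (Fin 3)) = univ := by
      ext k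
      fin_cases k <;> simp
    rw [this, linearIndepOn_univ_iff] at h2
    exact h2

lemma vol_general (Ψ : (Fin 3 → ℂ) → (Fin 3 → ℂ)) (ζ : Fin 3 → ℂ) (L : (Fin 3 → ℂ) →L[ℝ] (Fin 3 → ℂ))
    (hL : Function.Injective L)
    (hΨ : ∀ ε > (0:ℝ), ∃ U ∈ nhdsWithin ζ (closedPolydisc 3), ∀ x ∈ U, ∀ y ∈ U,
      ‖Ψ y - Ψ x - L (y - x)‖ ≤ ε * ‖y - x‖) :
    ∃ U ∈ nhdsWithin ζ (closedPolydisc 3), ∃ C : ℝ≥0∞, C ≠ ⊤ ∧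
      ∀ T : Set (Fin 3 → ℂ), volume (U ∩ Ψ ⁻¹' T) ≤ C * volume T := by
  have hdet : L.det ≠ 0 := by
    have : IsUnit (L : (Fin 3 → ℂ) →ₗ[ℝ] (Fin 3 → ℂ)) := by
      rw [LinearMap.isUnit_iff_ker_eq_bot, LinearMap.ker_eq_bot]; exact hL
    exact (LinearMap.isUnit_det _ this).ne_zero
  obtain ⟨m, hm0, hm⟩ : ∃ m : NNReal, 0 < m ∧ (m : ℝ≥0∞) < ENNReal.ofReal |L.det| := by
    refine ⟨(|L.det| / 2).toNNReal, ?_, ?_⟩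
    · simpa using hdet
    · change ENNReal.ofReal _ < _
      rw [ENNReal.ofReal_lt_ofReal_iff (abs_pos.2 hdet)]
      linarith [abs_pos.2 hdet]
  have hev := mul_le_addHaar_image_of_lt_det (volume : Measure (Fin 3 → ℂ)) L hm
  obtain ⟨δ, hδ, hδ0⟩ := (hev.and self_mem_nhdsWithin).exists
  obtain ⟨U, hU, hUa⟩ := hΨ δ (by exact_mod_cast hδ0)
  refine ⟨U, hU, (m : ℝ≥0∞)⁻¹, by simpa using hm0.ne', fun T => ?_⟩
  have h1 := hδ (U ∩ Ψ ⁻¹' T) Ψ (fun x hx y hy => hUa y hy.1 x hx.1)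
  have h2 : Ψ '' (U ∩ Ψ ⁻¹' T) ⊆ T := by rintro _ ⟨x, hx, rfl⟩; exact hx.2
  have h3 := h1.trans (measure_mono h2)
  rw [← ENNReal.div_eq_inv_mul, ENNReal.le_div_iff_mul_le (Or.inl (by simpa using hm0.ne')) (Or.inl (by simp)), mul_comm]
  exact h3

namespace Good
variable {φ : (Fin 3 → ℂ) → (Fin 3 → ℂ)}

lemma local_vol (h : Good φ) {ζ : Fin 3 → ℂ} (hζ : ζ ∈ closedPolydisc 3) (I : Finset (Fin 3))
    (M : Matrix (Fin 3) (Fin 3) ℂ) (hM : Function.Injective M.mulVec)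
    (hI : ∀ i ∈ I, ∀ j, M i j = jacEntry 3 φ ζ i j) :
    ∃ U ∈ nhdsWithin ζ (closedPolydisc 3), ∃ C : ℝ≥0∞, C ≠ ⊤ ∧
      ∀ T : Fin 3 → Set ℂ, volume (U ∩ {x | ∀ i, (if i ∈ I then φ x i else M.mulVec x i) ∈ T i}) ≤ C * ∏ i, volume (T i) := by
  let L : (Fin 3 → ℂ) →L[ℝ] (Fin 3 → ℂ) := ((M.mulVecLin).toContinuousLinearMap).restrictScalars ℝ
  have hLa : ∀ v, L v = M.mulVec v := fun v => rfl
  obtain ⟨U, hU, C, hC, H⟩ := vol_general (fun x i => if i ∈ I then φ x i else M.mulVec x i) ζ L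
    (fun v w hvw => hM hvw) (by
      intro ε hε
      obtain ⟨δ, hδ, H⟩ := h.unif hε
      refine ⟨closedPolydisc 3 ∩ ball ζ δ, inter_mem_nhdsWithin _ (ball_mem_nhds _ hδ), ?_⟩
      intro x hx y hy
      have h1 := H ζ hζ x hx.1 y hy.1 (by simpa [dist_eq_norm] using hx.2) (by simpa [dist_eq_norm] using hy.2)
      rw [pi_norm_le_iff_of_nonneg (by positivity)]
      intro i
      by_cases hi : i ∈ I
      · refine le_trans (le_of_eq ?_) ((norm_le_pi_norm _ i).trans h1)
        simp only [Pi.sub_apply, hi, if_true, hLa]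
        rw [h.D_apply hζ]
        simp [Matrix.mulVec, dotProduct, hI i hi]
      · simp only [Pi.sub_apply, hi, if_false, hLa, Matrix.mulVec_sub]
        simp only [sub_self, norm_zero]
        positivity)
  refine ⟨U, hU, C, hC, fun T => ?_⟩
  have := H (univ.pi T)
  rw [volume_pi_pi] at this
  refine le_trans (measure_mono ?_) this
  intro x hx
  exact ⟨hx.1, fun i _ => hx.2 i⟩

lemma far (h : Good φ) {ζ : Fin 3 → ℂ} (hζ : ζ ∈ closedPolydisc 3) :
    ∃ U ∈ nhdsWithin ζ (closedPolydisc 3), ∃ ε > (0:ℝ), ∀ x ∈ U, ∀ i, ‖φ ζ i‖ ≠ 1 → ∀ w : ℂ,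
      ‖φ x i - w‖ ≤ 1 - ‖w‖ → ε ≤ 1 - ‖w‖ := by
  obtain ⟨ε, hε, hε0⟩ : ∃ ε : ℝ, (∀ i, ‖φ ζ i‖ ≠ 1 → ‖φ ζ i‖ < 1 - 2 * ε) ∧ 0 < ε := by
    have : ∀ᶠ ε : ℝ in nhdsWithin 0 (Ioi 0), ∀ i, (‖φ ζ i‖ ≠ 1 → ‖φ ζ i‖ < 1 - 2 * ε) := by
      rw [Filter.eventually_all]
      intro i
      by_cases hi : ‖φ ζ i‖ = 1
      · simp [hi]
      · have hlt : ‖φ ζ i‖ < 1 := lt_of_le_of_ne (h.mapc hζ i) hi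
        have : Filter.Tendsto (fun ε : ℝ => 1 - 2 * ε) (nhds 0) (nhds (1 - 2 * 0)) := by
          apply Continuous.tendsto; fun_prop
        have := (this.eventually (lt_mem_nhds (a := ‖φ ζ i‖) (by simpa using hlt))).filter_mono (nhdsWithin_le_nhds (s := Ioi 0))
        filter_upwards [this] with e he _ using he
    obtain ⟨e, he⟩ := (this.and self_mem_nhdsWithin).exists
    exact ⟨e, he.1, he.2⟩
  refine ⟨{x | ∀ i, ‖φ ζ i‖ ≠ 1 → ‖φ x i‖ < 1 - 2 * ε}, ?_, ε, hε0, ?_⟩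
  · change ∀ᶠ x in nhdsWithin ζ (closedPolydisc 3), ∀ i, ‖φ ζ i‖ ≠ 1 → ‖φ x i‖ < 1 - 2 * ε
    rw [Filter.eventually_all]
    intro i
    by_cases hi : ‖φ ζ i‖ = 1
    · simp [hi]
    · have hc : ContinuousWithinAt (fun x => ‖φ x i‖) (closedPolydisc 3) ζ :=
        ((continuous_apply i).comp_continuousOn h.cont ζ hζ).norm
      filter_upwards [hc.eventually (gt_mem_nhds (hε i hi))] with x hx _ using hx
  · intro x hx i hi w hw
    have h1 := hx i hi
    have h2 := norm_sub_norm_le w (φ x i)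
    rw [norm_sub_rev] at h2
    linarith

end Good

end

section
lemma vol_cb (a : ℂ) {r : ℝ} (hr : 0 ≤ r) : volume (closedBall a r) = ENNReal.ofReal (Real.pi * r ^ 2) := by
  rw [Complex.volume_closedBall, mul_comm, ENNReal.ofReal_mul Real.pi_pos.le, ENNReal.ofReal_pow hr]
  congr 1
  rw [← NNReal.coe_real_pi, ENNReal.ofReal_coe_nnreal]

lemma vol_b (a : ℂ) {r : ℝ} (hr : 0 ≤ r) : volume (ball a r) = ENNReal.ofReal (Real.pi * r ^ 2) := by
  rw [← vol_cb a hr, Complex.volume_closedBall, Complex.volume_ball]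

lemma vol_annulus {t : ℝ} (ht : 0 ≤ t) : volume {z : ℂ | ‖z‖ ≤ 1 ∧ 1 - ‖z‖ ≤ t} ≤ ENNReal.ofReal (2 * Real.pi * t) := by
  have hpi := Real.pi_pos
  by_cases h1 : 1 ≤ t
  · calc volume {z : ℂ | ‖z‖ ≤ 1 ∧ 1 - ‖z‖ ≤ t} ≤ volume (closedBall (0:ℂ) 1) :=
          measure_mono (fun z hz => by simpa using hz.1)
      _ = ENNReal.ofReal (Real.pi * 1 ^ 2) := vol_cb _ zero_le_one
      _ ≤ _ := ENNReal.ofReal_le_ofReal (by nlinarith)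
  · push Not at h1
    calc volume {z : ℂ | ‖z‖ ≤ 1 ∧ 1 - ‖z‖ ≤ t} ≤ volume (closedBall (0:ℂ) 1 \ ball 0 (1 - t)) :=
          measure_mono (fun z hz => ⟨by simpa using hz.1, by
            have := hz.2
            simp only [mem_ball_zero_iff, not_lt]; linarith⟩)
      _ = volume (closedBall (0:ℂ) 1) - volume (ball (0:ℂ) (1 - t)) := by
          apply measure_sdiff
          · exact (ball_subset_ball (by linarith)).trans ball_subset_closedBall
          · exact measurableSet_ball.nullMeasurableSet
          · exact measure_ball_lt_top.ne
      _ = ENNReal.ofReal (Real.pi * 1 ^ 2 - Real.pi * (1 - t) ^ 2) := by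
          rw [vol_cb _ zero_le_one, vol_b _ (by linarith), ENNReal.ofReal_sub _ (by positivity)]
      _ ≤ _ := ENNReal.ofReal_le_ofReal (by nlinarith [mul_nonneg hpi.le (sq_nonneg t)])

/-- preimage boxes -/
def box (φ : (Fin 3 → ℂ) → (Fin 3 → ℂ)) (w : Fin 3 → ℂ) : Set (Fin 3 → ℂ) :=
  {x | ∀ i, ‖φ x i - w i‖ ≤ 1 - ‖w i‖}

/-- the volume estimate on a set -/
def VB (φ : (Fin 3 → ℂ) → (Fin 3 → ℂ)) (s : Set (Fin 3 → ℂ)) : Prop :=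
  ∃ C : ℝ≥0∞, C ≠ ⊤ ∧ ∀ w ∈ polydisc 3, volume (s ∩ box φ w) ≤ C * ∏ i, ENNReal.ofReal ((1 - ‖w i‖) ^ 2)

namespace Good
variable {φ : (Fin 3 → ℂ) → (Fin 3 → ℂ)}

lemma caseA (h : Good φ) {ζ : Fin 3 → ℂ} (hζ : ζ ∈ closedPolydisc 3) (I : Finset (Fin 3))
    (hI : ∀ i, i ∉ I → ‖φ ζ i‖ ≠ 1)
    (hLI : LinearIndepOn ℂ (fun i j => jacEntry 3 φ ζ i j) (I : Set (Fin 3))) :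
    ∃ U ∈ nhdsWithin ζ (closedPolydisc 3), VB φ U := by
  obtain ⟨M, hMJ, hMinj⟩ := extend_rows _ I hLI
  obtain ⟨U₁, hU₁, C, hC, H⟩ := h.local_vol hζ I M hMinj hMJ
  obtain ⟨U₂, hU₂, ε, hε, hfar⟩ := h.far hζ
  set R : ℝ := ∑ i, ∑ j, ‖M i j‖ with hR
  have hR0 : 0 ≤ R := by positivity
  have hMx : ∀ x ∈ closedPolydisc 3, ∀ i, ‖M.mulVec x i‖ ≤ R := by
    intro x hx i
    calc ‖M.mulVec x i‖ ≤ ∑ j, ‖M i j * x j‖ := by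
          simp only [Matrix.mulVec, dotProduct]; exact norm_sum_le _ _
      _ ≤ ∑ j, ‖M i j‖ := Finset.sum_le_sum fun j _ => by
          rw [norm_mul]; exact mul_le_of_le_one_right (norm_nonneg _) (hx j)
      _ ≤ R := Finset.single_le_sum (f := fun i => ∑ j, ‖M i j‖) (fun i _ => by positivity) (Finset.mem_univ i)
  set K := Real.pi * (1 + R ^ 2 / ε ^ 2) with hK
  have hpi := Real.pi_pos
  have hK0 : 0 ≤ K := by positivity
  refine ⟨U₁ ∩ U₂ ∩ closedPolydisc 3, Filter.inter_mem (Filter.inter_mem hU₁ hU₂) self_mem_nhdsWithin,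
    C * ENNReal.ofReal K ^ 3, ENNReal.mul_ne_top hC (by finiteness), fun w hw => ?_⟩
  by_cases hne : (U₁ ∩ U₂ ∩ closedPolydisc 3 ∩ box φ w).Nonempty
  · obtain ⟨x₀, hx₀, hb₀⟩ := hne
    let T : Fin 3 → Set ℂ := fun i => if i ∈ I then closedBall (w i) (1 - ‖w i‖) else closedBall 0 R
    have hT : ∀ i, volume (T i) ≤ ENNReal.ofReal K * ENNReal.ofReal ((1 - ‖w i‖) ^ 2) := by
      intro i
      have hwi := hw i
      rw [← ENNReal.ofReal_mul hK0]
      by_cases hi : i ∈ I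
      · simp only [T, hi, if_true]
        rw [vol_cb _ (by linarith)]
        apply ENNReal.ofReal_le_ofReal
        apply mul_le_mul_of_nonneg_right _ (by positivity)
        rw [hK]
        have : 0 ≤ R ^ 2 / ε ^ 2 := by positivity
        nlinarith
      · simp only [T, hi, if_false]
        rw [vol_cb _ hR0]
        apply ENNReal.ofReal_le_ofReal
        have h1 := hfar x₀ hx₀.1.2 i (hI i hi) (w i) (hb₀ i)
        have h2 : ε ^ 2 ≤ (1 - ‖w i‖) ^ 2 := pow_le_pow_left₀ hε.le h1 2
        have h3 : R ^ 2 ≤ R ^ 2 / ε ^ 2 * (1 - ‖w i‖) ^ 2 := by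
          rw [div_mul_eq_mul_div, le_div_iff₀ (by positivity)]
          exact mul_le_mul_of_nonneg_left h2 (by positivity)
        rw [hK, mul_assoc]
        apply mul_le_mul_of_nonneg_left _ hpi.le
        nlinarith [sq_nonneg (1 - ‖w i‖)]
    calc volume (U₁ ∩ U₂ ∩ closedPolydisc 3 ∩ box φ w)
        ≤ volume (U₁ ∩ {x | ∀ i, (if i ∈ I then φ x i else M.mulVec x i) ∈ T i}) := by
          apply measure_mono
          rintro x ⟨⟨⟨hx1, hx2⟩, hx3⟩, hxb⟩
          refine ⟨hx1, fun i => ?_⟩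
          by_cases hi : i ∈ I
          · simp only [T, hi, if_true]
            rw [mem_closedBall, dist_eq_norm]; exact hxb i
          · simp only [T, hi, if_false]
            rw [mem_closedBall_zero_iff]; exact hMx x hx3 i
      _ ≤ C * ∏ i, volume (T i) := H T
      _ ≤ C * ∏ i, (ENNReal.ofReal K * ENNReal.ofReal ((1 - ‖w i‖) ^ 2)) := by
          gcongr with i _
          exact hT i
      _ = _ := by
          rw [Finset.prod_mul_distrib]
          simp [mul_assoc]
  · rw [not_nonempty_iff_eq_empty] at hne
    rw [hne]; simp

lemma radial (h : Good φ) {ζ : Fin 3 → ℂ} (hζ : ζ ∈ closedPolydisc 3) {i : Fin 3}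
    (hi : ‖φ ζ i‖ = 1) (l : Fin 3) (hJ : jacEntry 3 φ ζ i l ≠ 0) :
    ∃ C > (0:ℝ), ∀ᶠ x in nhdsWithin ζ (closedPolydisc 3), 1 - ‖x l‖ ≤ C * (1 - ‖φ x i‖) := by
  have hl : ‖ζ l‖ = 1 := by
    by_contra hne
    exact hJ (h.jac_zero hζ (fun m hm => h.const_update hζ hi (Or.inl (lt_of_le_of_ne (hζ l) hne)) hm))
  have hζl : ζ l ≠ 0 := by intro h0; rw [h0] at hl; simp at hl
  have hφ0 : φ ζ i ≠ 0 := by intro h0; rw [h0] at hi; simp at hi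
  obtain ⟨a, ha0, ha⟩ := h.bd_nonneg hζ hi hl
  have hapos : 0 < a := by
    refine lt_of_le_of_ne ha0 fun h0 => ?_
    rw [← h0] at ha
    simp [hφ0, hJ, hζl] at ha
  set J := jacEntry 3 φ ζ i l
  set f : (Fin 3 → ℂ) → ℝ := fun x => ((starRingEnd ℂ) (φ x i) / ‖φ x i‖ * J * (x l / ‖x l‖)).re with hf
  have hcφ : ContinuousWithinAt (fun x => φ x i) (closedPolydisc 3) ζ :=
    (continuous_apply i).comp_continuousOn h.cont ζ hζ
  have hcl : ContinuousWithinAt (fun x : Fin 3 → ℂ => x l) (closedPolydisc 3) ζ :=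
    (continuous_apply l).continuousWithinAt
  have hfc : ContinuousWithinAt f (closedPolydisc 3) ζ := by
    apply Complex.continuous_re.continuousAt.comp_continuousWithinAt
    refine ((ContinuousWithinAt.div ?_ ?_ ?_).mul continuousWithinAt_const).mul (hcl.div ?_ ?_)
    · exact Complex.continuous_conj.continuousAt.comp_continuousWithinAt hcφ
    · exact Complex.continuous_ofReal.continuousAt.comp_continuousWithinAt hcφ.norm
    · simp [hφ0]
    · exact Complex.continuous_ofReal.continuousAt.comp_continuousWithinAt hcl.norm
    · simp [hζl]
  have hfζ : f ζ = a := by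
    simp only [hf, hi, hl, Complex.ofReal_one, div_one]
    rw [ha]; simp
  obtain ⟨δ, hδ, H⟩ := h.unif (ε := a / 4) (by positivity)
  refine ⟨4 / a, by positivity, ?_⟩
  have e1 : ∀ᶠ x in nhdsWithin ζ (closedPolydisc 3), a / 2 < f x :=
    hfc.eventually (lt_mem_nhds (by rw [hfζ]; linarith))
  have e2 : ∀ᶠ x in nhdsWithin ζ (closedPolydisc 3), φ x i ≠ 0 :=
    hcφ.eventually (isOpen_ne.mem_nhds hφ0)
  have e3 : ∀ᶠ x in nhdsWithin ζ (closedPolydisc 3), x l ≠ 0 :=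
    hcl.eventually (isOpen_ne.mem_nhds hζl)
  have e4 : ∀ᶠ x in nhdsWithin ζ (closedPolydisc 3), 1 - δ / 2 < ‖x l‖ :=
    hcl.norm.eventually (lt_mem_nhds (by simp only [hl]; linarith))
  have e5 : ∀ᶠ x in nhdsWithin ζ (closedPolydisc 3), x ∈ ball ζ (δ / 2) :=
    mem_nhdsWithin_of_mem_nhds (ball_mem_nhds _ (by linarith))
  filter_upwards [e1, e2, e3, e4, e5, self_mem_nhdsWithin] with x h1 h2 h3 h4 h5 h6
  rw [mem_ball, dist_eq_norm] at h5
  have hxl : 0 < ‖x l‖ := norm_pos_iff.2 h3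
  have hxφ : 0 < ‖φ x i‖ := norm_pos_iff.2 h2
  have hx1 : ‖x l‖ ≤ 1 := h6 l
  set u : ℂ := x l / ‖x l‖ with hu
  have hun : ‖u‖ = 1 := by rw [hu, norm_div, Complex.norm_real, norm_norm, div_self hxl.ne']
  have hux : u - x l = ((1 - ‖x l‖ : ℝ) : ℂ) * u := by
    have : (‖x l‖ : ℂ) ≠ 0 := by exact_mod_cast hxl.ne'
    rw [hu]; push_cast; field_simp
  have hy : Function.update x l u ∈ closedPolydisc 3 := update_mem h6 l hun.le
  have hyx : ‖Function.update x l u - x‖ = 1 - ‖x l‖ := by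
    rw [update_sub_single, norm_single, hux, norm_mul, hun, mul_one, Complex.norm_real, Real.norm_of_nonneg (by linarith)]
  have hyζ : ‖Function.update x l u - ζ‖ < δ := by
    have := norm_sub_le_norm_sub_add_norm_sub (Function.update x l u) x ζ
    linarith
  have key := H ζ hζ x h6 _ hy (by linarith) hyζ
  have key2 := (norm_le_pi_norm (φ (Function.update x l u) - φ x - DD φ ζ (Function.update x l u - x)) i).trans key
  simp only [Pi.sub_apply] at key2
  rw [hyx, update_sub_single, h.D_single hζ, hux] at key2
  have hyn : ‖φ (Function.update x l u) i‖ ≤ 1 := h.mapc hy i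
  set Y := φ (Function.update x l u) i
  set X := φ x i
  set t := 1 - ‖x l‖
  set ω : ℂ := (starRingEnd ℂ) X / ‖X‖ with hω
  have hωn : ‖ω‖ = 1 := by
    rw [hω, norm_div, RCLike.norm_conj, Complex.norm_real, norm_norm, div_self hxφ.ne']
  have hωX : ω * X = (‖X‖ : ℝ) := by
    have : (‖X‖ : ℂ) ≠ 0 := by exact_mod_cast hxφ.ne'
    rw [hω, div_mul_eq_mul_div, Complex.conj_mul', sq, mul_div_assoc, div_self this, mul_one]
  set e := Y - X - J * ((t:ℂ) * u)
  have heq : ω * Y = (‖X‖ : ℝ) + (t:ℝ) * (ω * J * u) + ω * e := by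
    rw [← hωX]; simp only [e]; ring
  have hre := congrArg Complex.re heq
  rw [Complex.add_re, Complex.add_re, Complex.ofReal_re, Complex.re_ofReal_mul] at hre
  have r1 : (ω * Y).re ≤ 1 := by
    refine (Complex.re_le_norm _).trans ?_
    rw [norm_mul, hωn]; linarith
  have r2 : -‖e‖ ≤ (ω * e).re := by
    have := Complex.abs_re_le_norm (ω * e)
    rw [norm_mul, hωn, one_mul] at this
    exact (abs_le.1 this).1
  have r3 : a / 2 < (ω * J * u).re := h1
  have ht : 0 ≤ t := by simp only [t]; linarith
  have r4 : t * (a / 2) ≤ t * (ω * J * u).re := mul_le_mul_of_nonneg_left r3.le ht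
  have r5 : a / 4 * t ≤ 1 - ‖X‖ := by linarith
  have : 4 / a * (a / 4 * t) = t := by field_simp
  rw [← this]
  exact mul_le_mul_of_nonneg_left r5 (by positivity)

end Good

end

section
namespace Good
variable {φ : (Fin 3 → ℂ) → (Fin 3 → ℂ)}

lemma caseB (h : Good φ) {ζ : Fin 3 → ℂ} (hζ : ζ ∈ closedPolydisc 3) {i : Fin 3}
    (hi : ‖φ ζ i‖ = 1) (hJ : ∀ l, jacEntry 3 φ ζ i l ≠ 0) :
    ∃ U ∈ nhdsWithin ζ (closedPolydisc 3), ∃ C : ℝ≥0∞, C ≠ ⊤ ∧ ∀ w : ℂ, ‖w‖ < 1 →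
      volume (U ∩ {x | ‖φ x i - w‖ ≤ 1 - ‖w‖}) ≤ C * ENNReal.ofReal ((1 - ‖w‖) ^ 4) := by
  choose Cl hCl0 hCl using fun l => h.radial hζ hi l (hJ l)
  let M : Matrix (Fin 3) (Fin 3) ℂ := fun l j => if l = i then jacEntry 3 φ ζ i j else if l = j then 1 else 0
  have hMne : ∀ l, l ≠ i → ∀ x, M.mulVec x l = x l := by
    intro l hl x
    simp [Matrix.mulVec, dotProduct, M, hl]
  have hMi : ∀ x, M.mulVec x i = ∑ j, jacEntry 3 φ ζ i j * x j := by
    intro x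
    simp [Matrix.mulVec, dotProduct, M]
  have hinj : Function.Injective M.mulVec := by
    intro x y hxy
    have hne : ∀ l, l ≠ i → x l = y l := by
      intro l hl
      rw [← hMne l hl x, hxy, hMne l hl y]
    have h2 := congrFun hxy i
    rw [hMi, hMi, Finset.sum_eq_add_sum_sdiff_singleton_of_mem (Finset.mem_univ i),
      Finset.sum_eq_add_sum_sdiff_singleton_of_mem (Finset.mem_univ i)
      (f := fun j => jacEntry 3 φ ζ i j * y j)] at h2
    have h3 : ∑ j ∈ Finset.univ \ {i}, jacEntry 3 φ ζ i j * x j = ∑ j ∈ Finset.univ \ {i}, jacEntry 3 φ ζ i j * y j := by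
      apply Finset.sum_congr rfl
      intro j hj
      rw [hne j (by simpa using hj)]
    rw [h3] at h2
    have h4 := mul_left_cancel₀ (hJ i) (add_right_cancel h2)
    ext l
    by_cases hl : l = i
    · rw [hl, h4]
    · rw [hne l hl]
  obtain ⟨U, hU, C, hC, H⟩ := h.local_vol hζ {i} M hinj (by
    intro l hl j
    rw [Finset.mem_singleton] at hl
    subst hl
    simp [M])
  have hev := (Filter.eventually_all.2 hCl)
  set S := ∑ l, Cl l with hS
  have hS0 : 0 ≤ S := Finset.sum_nonneg fun l _ => (hCl0 l).le
  have hpi := Real.pi_pos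
  set K := Real.pi * (1 + 4 * S) with hK
  have hK0 : 0 ≤ K := by positivity
  refine ⟨U ∩ {x | ∀ l, 1 - ‖x l‖ ≤ Cl l * (1 - ‖φ x i‖)} ∩ closedPolydisc 3,
    Filter.inter_mem (Filter.inter_mem hU hev) self_mem_nhdsWithin, C * ENNReal.ofReal (K ^ 3), by finiteness, fun w hw => ?_⟩
  set d := 1 - ‖w‖ with hd
  have hd0 : 0 < d := by linarith
  let T : Fin 3 → Set ℂ := fun l => if l = i then closedBall w d else {z : ℂ | ‖z‖ ≤ 1 ∧ 1 - ‖z‖ ≤ S * (2 * d)}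
  have hT : ∀ l, volume (T l) ≤ ENNReal.ofReal (K * (if l = i then d ^ 2 else d)) := by
    intro l
    by_cases hl : l = i
    · simp only [T, hl, if_true]
      rw [vol_cb _ hd0.le]
      apply ENNReal.ofReal_le_ofReal
      apply mul_le_mul_of_nonneg_right _ (by positivity)
      rw [hK]; nlinarith
    · simp only [T, hl, if_false]
      refine (vol_annulus (by positivity)).trans (ENNReal.ofReal_le_ofReal ?_)
      rw [hK]; nlinarith [mul_pos hpi hd0]
  calc _ ≤ volume (U ∩ {x | ∀ l, (if l ∈ ({i} : Finset (Fin 3)) then φ x l else M.mulVec x l) ∈ T l}) := by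
        apply measure_mono
        rintro x ⟨⟨⟨hx1, hx2⟩, hx3⟩, hxb⟩
        rw [mem_ofPred_eq] at hxb
        refine ⟨hx1, fun l => ?_⟩
        by_cases hl : l = i
        · subst hl
          simp only [T, Finset.mem_singleton, if_true]
          rw [mem_closedBall, dist_eq_norm]; exact hxb
        · simp only [T, Finset.mem_singleton, hl, if_false]
          rw [hMne l hl]
          refine ⟨hx3 l, (hx2 l).trans ?_⟩
          have h1 : Cl l ≤ S := Finset.single_le_sum (fun l _ => (hCl0 l).le) (Finset.mem_univ l)
          have h2 : 1 - ‖φ x i‖ ≤ 2 * d := by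
            have := norm_sub_norm_le w (φ x i)
            rw [norm_sub_rev] at this
            linarith
          have h3 : 0 ≤ 1 - ‖φ x i‖ := by linarith [h.mapc hx3 i]
          exact mul_le_mul h1 h2 h3 hS0
    _ ≤ C * ∏ l, volume (T l) := H T
    _ ≤ C * ∏ l, ENNReal.ofReal (K * (if l = i then d ^ 2 else d)) := by
        gcongr with l _
        exact hT l
    _ = _ := by
        rw [← ENNReal.ofReal_prod_of_nonneg, mul_assoc, ← ENNReal.ofReal_mul (by positivity)]
        · congr 2
          fin_cases i <;> simp [Fin.prod_univ_three] <;> ring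
        · intro l _
          split_ifs <;> positivity

end Good

end

section
lemma third_index (i₁ i₂ : Fin 3) (hne : i₁ ≠ i₂) :
    ∃ i₃, i₃ ≠ i₁ ∧ i₃ ≠ i₂ ∧ (∀ i, i = i₁ ∨ i = i₂ ∨ i = i₃) ∧ ∀ g : Fin 3 → ℝ≥0∞, ∏ i, g i = g i₁ * g i₂ * g i₃ := by
  have : ∃ i₃, i₃ ≠ i₁ ∧ i₃ ≠ i₂ ∧ (∀ i, i = i₁ ∨ i = i₂ ∨ i = i₃) := by
    revert i₁ i₂; decide
  obtain ⟨i₃, h1, h2, h3⟩ := this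
  refine ⟨i₃, h1, h2, h3, fun g => ?_⟩
  have : (Finset.univ : Finset (Fin 3)) = {i₁, i₂, i₃} := by
    ext i; simpa using h3 i
  rw [this, Finset.prod_insert (by simp [hne, h1.symm]), Finset.prod_insert (by simp [h2.symm]), Finset.prod_singleton, mul_assoc]

lemma VB_mono {φ : (Fin 3 → ℂ) → (Fin 3 → ℂ)} {s t : Set (Fin 3 → ℂ)} (hst : s ⊆ t) (h : VB φ t) : VB φ s := by
  obtain ⟨C, hC, H⟩ := h
  exact ⟨C, hC, fun w hw => (measure_mono (inter_subset_inter_left _ hst)).trans (H w hw)⟩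

namespace Good
variable {φ : (Fin 3 → ℂ) → (Fin 3 → ℂ)}

lemma caseC (h : Good φ) {ζ : Fin 3 → ℂ} (hζ : ζ ∈ closedPolydisc 3) {i₁ i₂ : Fin 3} (hne : i₁ ≠ i₂)
    (h1 : ‖φ ζ i₁‖ = 1) (h2 : ‖φ ζ i₂‖ = 1) (h3 : ∀ i, i ≠ i₁ → i ≠ i₂ → ‖φ ζ i‖ ≠ 1)
    (hJ : ∀ j, jacEntry 3 φ ζ i₁ j ≠ 0 ∧ jacEntry 3 φ ζ i₂ j ≠ 0) :
    ∃ U ∈ nhdsWithin ζ (closedPolydisc 3), VB φ U := by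
  obtain ⟨U₁, hU₁, C₁, hC₁, H₁⟩ := h.caseB hζ h1 (fun j => (hJ j).1)
  obtain ⟨U₂, hU₂, C₂, hC₂, H₂⟩ := h.caseB hζ h2 (fun j => (hJ j).2)
  obtain ⟨U₃, hU₃, ε, hε, hfar⟩ := h.far hζ
  obtain ⟨i₃, hi31, hi32, -, hprod⟩ := third_index i₁ i₂ hne
  refine ⟨U₁ ∩ U₂ ∩ U₃, Filter.inter_mem (Filter.inter_mem hU₁ hU₂) hU₃,
    (C₁ + C₂) * ENNReal.ofReal ((ε ^ 2)⁻¹), by finiteness, fun w hw => ?_⟩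
  by_cases hemp : (U₁ ∩ U₂ ∩ U₃ ∩ box φ w).Nonempty
  · obtain ⟨x₀, hx₀, hb₀⟩ := hemp
    have h3' := hfar x₀ hx₀.2 i₃ (h3 i₃ hi31 hi32) _ (hb₀ i₃)
    rw [hprod, ← ENNReal.ofReal_mul (by positivity), ← ENNReal.ofReal_mul (by positivity), mul_assoc,
      ← ENNReal.ofReal_mul (by positivity)]
    have hd1 : 0 < 1 - ‖w i₁‖ := by linarith [hw i₁]
    have hd2 : 0 < 1 - ‖w i₂‖ := by linarith [hw i₂]
    set d1 := 1 - ‖w i₁‖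
    set d2 := 1 - ‖w i₂‖
    set d3 := 1 - ‖w i₃‖
    have hb : 1 ≤ (ε ^ 2)⁻¹ * d3 ^ 2 := by
      rw [inv_mul_eq_div, one_le_div (by positivity)]
      exact pow_le_pow_left₀ hε.le h3' 2
    rcases le_total d1 d2 with hle | hle
    · calc _ ≤ volume (U₁ ∩ {x | ‖φ x i₁ - w i₁‖ ≤ d1}) :=
            measure_mono (fun x hx => ⟨hx.1.1.1, hx.2 i₁⟩)
        _ ≤ C₁ * ENNReal.ofReal (d1 ^ 4) := H₁ _ (hw i₁)
        _ ≤ _ := by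
          gcongr
          · exact le_self_add
          · have := pow_le_pow_left₀ hd1.le hle 2
            calc d1 ^ 4 = d1 ^ 2 * d1 ^ 2 * 1 := by ring
              _ ≤ d1 ^ 2 * d2 ^ 2 * ((ε ^ 2)⁻¹ * d3 ^ 2) := by gcongr
              _ = _ := by ring
    · calc _ ≤ volume (U₂ ∩ {x | ‖φ x i₂ - w i₂‖ ≤ d2}) :=
            measure_mono (fun x hx => ⟨hx.1.1.2, hx.2 i₂⟩)
        _ ≤ C₂ * ENNReal.ofReal (d2 ^ 4) := H₂ _ (hw i₂)
        _ ≤ _ := by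
          gcongr
          · exact le_add_self
          · calc d2 ^ 4 = d2 ^ 2 * d2 ^ 2 * 1 := by ring
              _ ≤ d1 ^ 2 * d2 ^ 2 * ((ε ^ 2)⁻¹ * d3 ^ 2) := by gcongr
              _ = _ := by ring
  · rw [not_nonempty_iff_eq_empty] at hemp
    rw [hemp]; simp

lemma local_VB (h : Good φ)
    (h1 : ∀ ζ ∈ torus 3, φ ζ ∈ torus 3 → Matrix.det (Matrix.of fun i j => jacEntry 3 φ ζ i j) ≠ 0)
    (h2 : ∀ i₁ i₂ : Fin 3, i₁ < i₂ → ∀ ζ ∈ torus 3, ‖φ ζ i₁‖ = 1 → ‖φ ζ i₂‖ = 1 →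
          (LinearIndependent ℂ
              ![fun j => jacEntry 3 φ ζ i₁ j, fun j => jacEntry 3 φ ζ i₂ j] ∨
            ∀ j : Fin 3, jacEntry 3 φ ζ i₁ j ≠ 0 ∧ jacEntry 3 φ ζ i₂ j ≠ 0))
    {ζ : Fin 3 → ℂ} (hζ : ζ ∈ closedPolydisc 3) :
    ∃ U ∈ nhdsWithin ζ (closedPolydisc 3), VB φ U := by
  obtain ⟨w, hw, H⟩ := h.to_torus hζ
  by_cases hall : ∀ i, ‖φ ζ i‖ = 1
  · have hd := h1 w hw (fun i => by rw [(H i (hall i)).1, hall i])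
    have hJ : (fun i j => jacEntry 3 φ w i j) = fun i j => jacEntry 3 φ ζ i j := by
      ext i j; exact (H i (hall i)).2 j
    rw [hJ] at hd
    have hli := Matrix.linearIndependent_rows_of_det_ne_zero hd
    apply h.caseA hζ Finset.univ (by simp)
    rw [Finset.coe_univ, linearIndepOn_univ_iff]
    exact hli
  by_cases htwo : ∃ i₁ i₂ : Fin 3, i₁ < i₂ ∧ ‖φ ζ i₁‖ = 1 ∧ ‖φ ζ i₂‖ = 1
  · obtain ⟨i₁, i₂, hlt, e1, e2⟩ := htwo
    have hr1 : (fun j => jacEntry 3 φ w i₁ j) = fun j => jacEntry 3 φ ζ i₁ j := funext (H i₁ e1).2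
    have hr2 : (fun j => jacEntry 3 φ w i₂ j) = fun j => jacEntry 3 φ ζ i₂ j := funext (H i₂ e2).2
    have h3 : ∀ i, i ≠ i₁ → i ≠ i₂ → ‖φ ζ i‖ ≠ 1 := by
      obtain ⟨i₃, -, -, hi, -⟩ := third_index i₁ i₂ hlt.ne
      intro i hi1 hi2 hi3
      apply hall
      intro k
      rcases hi k with rfl | rfl | rfl
      · exact e1
      · exact e2
      · rcases hi i with rfl | rfl | rfl
        · exact absurd rfl hi1
        · exact absurd rfl hi2
        · exact hi3
    rcases h2 i₁ i₂ hlt w hw (by rw [(H i₁ e1).1, e1]) (by rw [(H i₂ e2).1, e2]) with hli | hnz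
    · rw [hr1, hr2] at hli
      apply h.caseA hζ {i₁, i₂}
      · intro i hi
        simp only [Finset.mem_insert, Finset.mem_singleton, not_or] at hi
        exact h3 i hi.1 hi.2
      · rw [Finset.coe_insert, Finset.coe_singleton, LinearIndepOn.pair_iff _ hlt.ne]
        exact LinearIndependent.pair_iff.1 hli
    · apply h.caseC hζ hlt.ne e1 e2 h3
      intro j
      rw [← (H i₁ e1).2, ← (H i₂ e2).2]
      exact hnz j
  by_cases hone : ∃ i, ‖φ ζ i‖ = 1
  · obtain ⟨i, hi⟩ := hone
    apply h.caseA hζ {i}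
    · intro k hk hk1
      rw [Finset.mem_singleton] at hk
      rcases lt_or_gt_of_ne hk with hlt | hlt
      · exact htwo ⟨k, i, hlt, hk1, hi⟩
      · exact htwo ⟨i, k, hlt, hi, hk1⟩
    · rw [Finset.coe_singleton, linearIndepOn_singleton_iff]
      intro h0
      obtain ⟨j, hj⟩ := h.grad_ne hζ hi
      exact hj (congrFun h0 j)
  · push Not at hone
    apply h.caseA hζ ∅ (fun i _ => hone i)
    simp

lemma global_VB (h : Good φ)
    (h1 : ∀ ζ ∈ torus 3, φ ζ ∈ torus 3 → Matrix.det (Matrix.of fun i j => jacEntry 3 φ ζ i j) ≠ 0)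
    (h2 : ∀ i₁ i₂ : Fin 3, i₁ < i₂ → ∀ ζ ∈ torus 3, ‖φ ζ i₁‖ = 1 → ‖φ ζ i₂‖ = 1 →
          (LinearIndependent ℂ
              ![fun j => jacEntry 3 φ ζ i₁ j, fun j => jacEntry 3 φ ζ i₂ j] ∨
            ∀ j : Fin 3, jacEntry 3 φ ζ i₁ j ≠ 0 ∧ jacEntry 3 φ ζ i₂ j ≠ 0)) :
    VB φ (polydisc 3) := by
  refine VB_mono pd_subset ?_
  refine isCompact_cpd.induction_on (p := VB φ) ⟨0, by simp, by simp⟩ (fun s t hst => VB_mono hst) ?_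
    (fun ζ hζ => h.local_VB h1 h2 hζ)
  rintro s t ⟨C, hC, H⟩ ⟨C', hC', H'⟩
  refine ⟨C + C', by finiteness, fun w hw => ?_⟩
  rw [union_inter_distrib_right, add_mul]
  exact (measure_union_le _ _).trans (add_le_add (H w hw) (H' w hw))

end Good

end

section
lemma circle_submean {g : ℂ → ℂ} {c : ℂ} {R t : ℝ} (hg : DifferentiableOn ℂ g (ball c R)) (ht : 0 < t) (htR : t < R) :
    ENNReal.ofReal (2 * Real.pi) * ‖g c‖ₑ ^ 2 ≤
      ∫⁻ θ in Ioo (-Real.pi) Real.pi, ‖g (circleMap c t θ)‖ₑ ^ 2 := by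
  have hpi := Real.pi_pos
  have hd : DiffContOnCl ℂ (fun z => g z ^ 2) (ball c |t|) := by
    apply DifferentiableOn.diffContOnCl
    apply (hg.mono _).pow
    rw [abs_of_pos ht, closure_ball _ ht.ne']
    exact closedBall_subset_ball htR
  have h1 := hd.circleAverage
  rw [Real.circleAverage_def] at h1
  have hper : Function.Periodic (fun θ => g (circleMap c t θ) ^ 2) (2 * Real.pi) := by
    intro θ
    simp only [periodic_circleMap c t θ]
  have h2 := hper.intervalIntegral_add_eq 0 (-Real.pi)
  rw [zero_add, show -Real.pi + 2 * Real.pi = Real.pi by ring] at h2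
  rw [h2, intervalIntegral.integral_of_le (by linarith)] at h1
  have h3 : ‖g c‖ₑ ^ 2 ≤ ENNReal.ofReal (2 * Real.pi)⁻¹ * ∫⁻ θ in Ioo (-Real.pi) Real.pi, ‖g (circleMap c t θ)‖ₑ ^ 2 := by
    rw [← enorm_pow, ← h1, enorm_smul, Real.enorm_of_nonneg (by positivity)]
    gcongr
    refine (enorm_integral_le_lintegral_enorm _).trans ?_
    simp_rw [enorm_pow]
    rw [restrict_Ioo_eq_restrict_Ioc]
  calc _ ≤ ENNReal.ofReal (2 * Real.pi) * (ENNReal.ofReal (2 * Real.pi)⁻¹ * ∫⁻ θ in Ioo (-Real.pi) Real.pi, ‖g (circleMap c t θ)‖ₑ ^ 2) := by gcongr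
    _ = _ := by
      rw [← mul_assoc, ← ENNReal.ofReal_mul (by positivity), mul_inv_cancel₀ (by positivity)]; simp

lemma polar_int {F : ℂ → ℝ≥0∞} (hF : Measurable F) :
    ∫⁻ z, F z = ∫⁻ t in Ioi (0:ℝ), ∫⁻ θ in Ioo (-Real.pi) Real.pi, ENNReal.ofReal t * F (circleMap 0 t θ) := by
  rw [← Complex.lintegral_comp_polarCoord_symm]
  have : polarCoord.target = Ioi (0:ℝ) ×ˢ Ioo (-Real.pi) Real.pi := rfl
  rw [this, Measure.volume_eq_prod, ← Measure.prod_restrict]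
  have he : ∀ p : ℝ × ℝ, Complex.polarCoord.symm p = circleMap 0 p.1 p.2 := by
    intro p
    rw [Complex.polarCoord_symm_apply, circleMap_zero, Complex.exp_mul_I]
    push_cast; rfl
  have hm : Measurable fun p : ℝ × ℝ => circleMap 0 p.1 p.2 := by
    have : Continuous fun p : ℝ × ℝ => circleMap 0 p.1 p.2 := by
      unfold circleMap; fun_prop
    exact this.measurable
  simp_rw [he, smul_eq_mul]
  rw [lintegral_prod]
  apply Measurable.aemeasurable
  exact (ENNReal.measurable_ofReal.comp measurable_fst).mul (hF.comp hm)

lemma meas_ind {X Y : Type*} [TopologicalSpace X] [MeasurableSpace X] [OpensMeasurableSpace X] [TopologicalSpace Y]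
    [MeasurableSpace Y] [BorelSpace Y] [Zero Y] {s : Set X} (hs : MeasurableSet s) {f : X → Y} (hf : ContinuousOn f s) :
    Measurable (s.indicator f) := by
  classical
  rw [← piecewise_eq_indicator]
  exact hf.measurable_piecewise continuousOn_const hs

lemma disc_submean {g : ℂ → ℂ} {c : ℂ} {R r : ℝ} (hg : DifferentiableOn ℂ g (ball c R)) (hr : 0 < r) (hrR : r ≤ R) :
    ENNReal.ofReal (Real.pi * r ^ 2) * ‖g c‖ₑ ^ 2 ≤ ∫⁻ z in ball c r, ‖g z‖ₑ ^ 2 := by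
  have hgm : Measurable ((ball c r).indicator fun z => ‖g z‖ₑ ^ 2) := by
    have : Measurable ((ball c r).indicator g) :=
      meas_ind measurableSet_ball (hg.continuousOn.mono (ball_subset_ball hrR))
    have h2 : ((ball c r).indicator fun z => ‖g z‖ₑ ^ 2) = fun z => ‖(ball c r).indicator g z‖ₑ ^ 2 := by
      ext z
      by_cases hz : z ∈ ball c r <;> simp [hz]
    rw [h2]
    exact this.enorm.pow_const 2
  set G := (ball c r).indicator fun z => ‖g z‖ₑ ^ 2 with hG
  have e1 : ∫⁻ z in ball c r, ‖g z‖ₑ ^ 2 = ∫⁻ z, G (c + z) := by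
    rw [lintegral_add_left_eq_self, hG, lintegral_indicator measurableSet_ball]
  have e2 : ENNReal.ofReal (Real.pi * r ^ 2) * ‖g c‖ₑ ^ 2 = ∫⁻ z, (ball (0:ℂ) r).indicator (fun _ => ‖g c‖ₑ ^ 2) z := by
    rw [lintegral_indicator measurableSet_ball, setLIntegral_const, vol_b _ hr.le, mul_comm]
  rw [e1, e2, polar_int (measurable_const.indicator measurableSet_ball), polar_int (F := fun z => G (c + z)) (hgm.comp (measurable_const_add c))]
  apply lintegral_mono_ae
  filter_upwards [ae_restrict_mem measurableSet_Ioi] with t ht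
  rw [mem_Ioi] at ht
  by_cases htr : t < r
  · have m1 : ∀ θ, circleMap 0 t θ ∈ ball (0:ℂ) r := by
      intro θ; rw [mem_ball_zero_iff, norm_circleMap_zero, abs_of_pos ht]; exact htr
    have m2 : ∀ θ, c + circleMap 0 t θ = circleMap c t θ := by
      intro θ; simp [circleMap]
    have m3 : ∀ θ, circleMap c t θ ∈ ball c r := by
      intro θ; rw [← m2, mem_ball_iff_norm]; simpa [abs_of_pos ht] using htr
    simp_rw [hG, indicator_of_mem (m1 _), m2, indicator_of_mem (m3 _)]
    rw [lintegral_const_mul' _ _ ENNReal.ofReal_ne_top, lintegral_const_mul' _ _ ENNReal.ofReal_ne_top]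
    gcongr ENNReal.ofReal t * ?_
    refine le_trans (le_of_eq ?_) (circle_submean hg ht (htr.trans_le hrR))
    rw [setLIntegral_const, Real.volume_Ioo, mul_comm]
    congr 2
    ring
  · have m1 : ∀ θ, circleMap 0 t θ ∉ ball (0:ℂ) r := by
      intro θ; rw [mem_ball_zero_iff, norm_circleMap_zero, abs_of_pos ht]; exact htr
    simp_rw [indicator_of_notMem (m1 _)]
    simp

end

section
/-- the square of the modulus, extended by zero -/
def sqF (f : (Fin 3 → ℂ) → ℂ) : (Fin 3 → ℂ) → ℝ≥0∞ := fun z => ‖(polydisc 3).indicator f z‖ₑ ^ 2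

lemma sqF_meas {f : (Fin 3 → ℂ) → ℂ} (hf : DifferentiableOn ℂ f (polydisc 3)) : Measurable (sqF f) :=
  (meas_ind isOpen_polydisc.measurableSet hf.continuousOn).enorm.pow_const 2

lemma sqF_mem {f : (Fin 3 → ℂ) → ℂ} {z : Fin 3 → ℂ} (hz : z ∈ polydisc 3) : sqF f z = ‖f z‖ₑ ^ 2 := by
  simp [sqF, hz]

lemma poly_submean_aux {f : (Fin 3 → ℂ) → ℂ} (hf : DifferentiableOn ℂ f (polydisc 3)) {w : Fin 3 → ℂ}
    (r : Fin 3 → ℝ) (hr : ∀ j, 0 < r j) (hrw : ∀ j, ‖w j‖ + r j ≤ 1) (s : Finset (Fin 3)) :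
    ∀ x : Fin 3 → ℂ, (∀ j, x j ∈ ball (w j) (r j)) → (∀ j ∈ s, x j = w j) →
      (∏ j ∈ s, ENNReal.ofReal (Real.pi * r j ^ 2)) * sqF f x ≤
        (∫⋯∫⁻_s, sqF f ∂(fun j => volume.restrict (ball (w j) (r j)))) x := by
  have hpd : ∀ x : Fin 3 → ℂ, (∀ j, x j ∈ ball (w j) (r j)) → x ∈ polydisc 3 := by
    intro x hx j
    have h1 := hx j
    rw [mem_ball_iff_norm] at h1
    have h2 := norm_sub_norm_le (x j) (w j)
    linarith [hrw j]
  induction s using Finset.induction with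
  | empty => intro x _ _; simp
  | insert i s hi ih =>
    intro x hx hxw
    rw [lmarginal_insert _ (sqF_meas hf) hi, Finset.prod_insert hi]
    have hxi : x i = w i := hxw i (Finset.mem_insert_self _ _)
    have hup : ∀ y ∈ ball (w i) (r i), ∀ j, Function.update x i y j ∈ ball (w j) (r j) := by
      intro y hy j
      by_cases hj : j = i
      · subst hj; simpa using hy
      · rw [Function.update_of_ne hj]; exact hx j
    have h1 : ∫⁻ y in ball (w i) (r i), (∏ j ∈ s, ENNReal.ofReal (Real.pi * r j ^ 2)) * ‖f (Function.update x i y)‖ₑ ^ 2 ≤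
        ∫⁻ y in ball (w i) (r i), (∫⋯∫⁻_s, sqF f ∂(fun j => volume.restrict (ball (w j) (r j)))) (Function.update x i y) := by
      apply lintegral_mono_ae
      filter_upwards [ae_restrict_mem measurableSet_ball] with y hy
      have := ih (Function.update x i y) (hup y hy) (by
        intro j hj
        have hji : j ≠ i := fun h => hi (h ▸ hj)
        rw [Function.update_of_ne hji]
        exact hxw j (Finset.mem_insert_of_mem hj))
      rwa [sqF_mem (hpd _ (hup y hy))] at this
    refine le_trans ?_ h1
    rw [lintegral_const_mul' _ _ (ENNReal.prod_ne_top fun _ _ => ENNReal.ofReal_ne_top), mul_comm (ENNReal.ofReal _), mul_assoc]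
    gcongr (∏ j ∈ s, ENNReal.ofReal (Real.pi * r j ^ 2)) * ?_
    have h2 := disc_submean (g := fun y => f (Function.update x i y)) (c := w i) (r := r i) (R := r i) ?_ (hr i) le_rfl
    · rw [sqF_mem (hpd x hx)]
      rw [← hxi, Function.update_eq_self] at h2
      rw [← hxi]
      exact h2
    · apply hf.comp
      · intro y hy
        exact (hasFDerivAt_update x y).differentiableAt.differentiableWithinAt
      · intro y hy
        exact hpd _ (hup y hy)

lemma poly_submean {f : (Fin 3 → ℂ) → ℂ} (hf : DifferentiableOn ℂ f (polydisc 3)) {w : Fin 3 → ℂ}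
    (r : Fin 3 → ℝ) (hr : ∀ j, 0 < r j) (hrw : ∀ j, ‖w j‖ + r j ≤ 1) :
    (∏ j, ENNReal.ofReal (Real.pi * r j ^ 2)) * sqF f w ≤
      ∫⁻ z in {z | ∀ j, z j ∈ ball (w j) (r j)}, sqF f z := by
  have := poly_submean_aux hf r hr hrw Finset.univ w (fun j => mem_ball_self (hr j)) (fun _ _ => rfl)
  rw [lmarginal_univ] at this
  simp only at this
  rw [← Measure.restrict_pi_pi] at this
  have e : {z : Fin 3 → ℂ | ∀ j, z j ∈ ball (w j) (r j)} = Set.pi Set.univ fun j => ball (w j) (r j) := by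
    ext z; simp
  rw [e]
  exact this

end

section
/-- the reciprocal weight -/
def BB (z : Fin 3 → ℂ) : ℝ≥0∞ := (∏ j, ENNReal.ofReal (Real.pi * ((1 - ‖z j‖) / 3) ^ 2))⁻¹

lemma BB_meas : Measurable BB := by
  unfold BB
  apply Measurable.inv
  apply Finset.measurable_prod
  intro j _
  apply ENNReal.measurable_ofReal.comp
  apply Continuous.measurable
  fun_prop

lemma sqF_le {f : (Fin 3 → ℂ) → ℂ} (hf : DifferentiableOn ℂ f (polydisc 3)) {w : Fin 3 → ℂ} (hw : w ∈ polydisc 3) :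
    sqF f w ≤ ∫⁻ z in {z | z ∈ polydisc 3 ∧ ∀ j, ‖w j - z j‖ ≤ 1 - ‖z j‖}, BB z * sqF f z := by
  have hpi := Real.pi_pos
  set r : Fin 3 → ℝ := fun j => (1 - ‖w j‖) / 2 with hr
  have hr0 : ∀ j, 0 < r j := fun j => by have := hw j; simp only [hr]; linarith
  have h1 := poly_submean (w := w) hf r hr0 (fun j => by have := hw j; simp only [hr]; linarith)
  set A := ∏ j, ENNReal.ofReal (Real.pi * r j ^ 2) with hA
  have hA0 : A ≠ 0 := by
    rw [hA, Finset.prod_ne_zero_iff]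
    intro j _
    have := hr0 j
    rw [ENNReal.ofReal_ne_zero_iff]
    positivity
  have hAt : A ≠ ⊤ := ENNReal.prod_ne_top fun _ _ => ENNReal.ofReal_ne_top
  have hE : MeasurableSet {z : Fin 3 → ℂ | ∀ j, z j ∈ ball (w j) (r j)} := by
    have e : {z : Fin 3 → ℂ | ∀ j, z j ∈ ball (w j) (r j)} = Set.pi Set.univ fun j => ball (w j) (r j) := by
      ext z; simp
    rw [e]
    exact MeasurableSet.univ_pi fun j => measurableSet_ball
  calc sqF f w = A⁻¹ * (A * sqF f w) := by rw [← mul_assoc, ENNReal.inv_mul_cancel hA0 hAt, one_mul]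
    _ ≤ A⁻¹ * ∫⁻ z in {z | ∀ j, z j ∈ ball (w j) (r j)}, sqF f z := by gcongr A⁻¹ * ?_
    _ = ∫⁻ z in {z | ∀ j, z j ∈ ball (w j) (r j)}, A⁻¹ * sqF f z := by
        rw [lintegral_const_mul' _ _ (ENNReal.inv_ne_top.2 hA0)]
    _ ≤ ∫⁻ z in {z | ∀ j, z j ∈ ball (w j) (r j)}, BB z * sqF f z := by
        apply lintegral_mono_ae
        filter_upwards [ae_restrict_mem hE] with z hz
        gcongr ?_ * _
        unfold BB
        rw [hA, ENNReal.inv_le_inv]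
        gcongr with j _
        · have h2 := hz j
          rw [mem_ball_iff_norm] at h2
          have := norm_sub_norm_le (z j) (w j)
          simp only [hr] at h2
          linarith [hw j]
        · have h2 := hz j
          rw [mem_ball_iff_norm'] at h2
          have := norm_sub_norm_le (w j) (z j)
          simp only [hr] at h2 ⊢
          linarith
    _ ≤ _ := by
        apply lintegral_mono_set
        intro z hz
        have key : ∀ j, ‖w j - z j‖ < r j ∧ r j ≤ 1 - ‖z j‖ := by
          intro j
          have h2 := hz j
          rw [mem_ball_iff_norm'] at h2
          have := norm_sub_norm_le (z j) (w j)
          rw [norm_sub_rev] at this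
          refine ⟨h2, ?_⟩
          simp only [hr] at h2 ⊢
          linarith
        exact ⟨fun j => by linarith [key j, hr0 j], fun j => by linarith [key j]⟩

namespace Good
variable {φ : (Fin 3 → ℂ) → (Fin 3 → ℂ)}

lemma carleson (h : Good φ) (hV : VB φ (polydisc 3)) : ∃ K : ℝ≥0∞, K ≠ ⊤ ∧
    ∀ f : (Fin 3 → ℂ) → ℂ, DifferentiableOn ℂ f (polydisc 3) →
      ∫⁻ z in polydisc 3, ‖f (φ z)‖ₑ ^ 2 ≤ K * ∫⁻ z in polydisc 3, ‖f z‖ₑ ^ 2 := by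
  obtain ⟨C, hC, H⟩ := hV
  have hpi := Real.pi_pos
  have hPm : MeasurableSet (polydisc 3) := isOpen_polydisc.measurableSet
  refine ⟨C * ENNReal.ofReal ((9 / Real.pi) ^ 3), by finiteness, fun f hf => ?_⟩
  let φ' := (polydisc 3).indicator φ
  have hφ' : Measurable φ' := meas_ind hPm h.hol.continuousOn
  let S : Set ((Fin 3 → ℂ) × (Fin 3 → ℂ)) :=
    {p | p.1 ∈ polydisc 3 ∧ p.2 ∈ polydisc 3 ∧ ∀ j, ‖φ' p.1 j - p.2 j‖ ≤ 1 - ‖p.2 j‖}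
  have hS : MeasurableSet S := by
    have e : S = Prod.fst ⁻¹' polydisc 3 ∩ (Prod.snd ⁻¹' polydisc 3 ∩
        ⋂ j, {p : (Fin 3 → ℂ) × (Fin 3 → ℂ) | ‖φ' p.1 j - p.2 j‖ ≤ 1 - ‖p.2 j‖}) := by
      ext p; simp [S]
    rw [e]
    refine (hPm.preimage measurable_fst).inter ((hPm.preimage measurable_snd).inter ?_)
    refine MeasurableSet.iInter fun j => measurableSet_le ?_ ?_
    · exact ((((measurable_pi_apply j).comp hφ').comp measurable_fst).sub ((measurable_pi_apply j).comp measurable_snd)).norm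
    · exact measurable_const.sub ((measurable_pi_apply j).comp measurable_snd).norm
  let k : (Fin 3 → ℂ) × (Fin 3 → ℂ) → ℝ≥0∞ := S.indicator fun p => BB p.2 * sqF f p.2
  have hk : Measurable k := (((BB_meas).comp measurable_snd).mul ((sqF_meas hf).comp measurable_snd)).indicator hS
  have hslice : ∀ w : Fin 3 → ℂ, MeasurableSet {z : Fin 3 → ℂ | z ∈ polydisc 3 ∧ ∀ j, ‖w j - z j‖ ≤ 1 - ‖z j‖} := by
    intro w
    have e : {z : Fin 3 → ℂ | z ∈ polydisc 3 ∧ ∀ j, ‖w j - z j‖ ≤ 1 - ‖z j‖} =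
        polydisc 3 ∩ ⋂ j, {z : Fin 3 → ℂ | ‖w j - z j‖ ≤ 1 - ‖z j‖} := by ext p; simp
    rw [e]
    refine hPm.inter (IsClosed.measurableSet ?_)
    exact isClosed_iInter fun j => isClosed_le (by fun_prop) (by fun_prop)
  calc ∫⁻ x in polydisc 3, ‖f (φ x)‖ₑ ^ 2 ≤ ∫⁻ x in polydisc 3, ∫⁻ z, k (x, z) := by
        apply lintegral_mono_ae
        filter_upwards [ae_restrict_mem hPm] with x hx
        rw [← sqF_mem (f := f) (h.map x hx)]
        refine (sqF_le hf (h.map x hx)).trans (le_of_eq ?_)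
        rw [← lintegral_indicator (hslice _)]
        congr 1
        ext z
        have e : φ' x = φ x := indicator_of_mem hx _
        by_cases hz : z ∈ {z : Fin 3 → ℂ | z ∈ polydisc 3 ∧ ∀ j, ‖φ x j - z j‖ ≤ 1 - ‖z j‖}
        · have : (x, z) ∈ S := ⟨hx, hz.1, by simpa only [e] using hz.2⟩
          simp only [k, indicator_of_mem hz, indicator_of_mem this]
        · have : (x, z) ∉ S := fun hh => hz ⟨hh.2.1, by simpa only [e] using hh.2.2⟩
          simp only [k, indicator_of_notMem hz, indicator_of_notMem this]
    _ ≤ ∫⁻ x, ∫⁻ z, k (x, z) := setLIntegral_le_lintegral _ _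
    _ = ∫⁻ z, ∫⁻ x, k (x, z) := lintegral_lintegral_swap (f := fun x z => k (x, z)) hk.aemeasurable
    _ ≤ ∫⁻ z, (polydisc 3).indicator (fun z => C * ENNReal.ofReal ((9 / Real.pi) ^ 3) * ‖f z‖ₑ ^ 2) z := by
        apply lintegral_mono
        intro z
        by_cases hz : z ∈ polydisc 3
        · simp only [indicator_of_mem hz]
          have e1 : ∫⁻ x, k (x, z) ≤ ∫⁻ x, (toMeasurable volume (polydisc 3 ∩ box φ z)).indicator (fun _ => BB z * sqF f z) x := by
            apply lintegral_mono
            intro x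
            by_cases hx : (x, z) ∈ S
            · have : x ∈ toMeasurable volume (polydisc 3 ∩ box φ z) := by
                apply subset_toMeasurable
                refine ⟨hx.1, fun j => ?_⟩
                have e : φ' x = φ x := indicator_of_mem hx.1 _
                rw [← e]; exact hx.2.2 j
              simp only [k, indicator_of_mem hx, indicator_of_mem this]; exact le_rfl
            · simp only [k, indicator_of_notMem hx]; exact zero_le
          refine e1.trans ?_
          rw [lintegral_indicator (measurableSet_toMeasurable _ _), setLIntegral_const, measure_toMeasurable, sqF_mem hz]
          have e2 : BB z * ∏ i, ENNReal.ofReal ((1 - ‖z i‖) ^ 2) = ENNReal.ofReal ((9 / Real.pi) ^ 3) := by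
            have hpos : ∀ j, 0 < 1 - ‖z j‖ := fun j => by linarith [hz j]
            unfold BB
            rw [← ENNReal.ofReal_prod_of_nonneg (fun j _ => by positivity), ← ENNReal.ofReal_prod_of_nonneg (fun j _ => by positivity),
              ← ENNReal.ofReal_inv_of_pos (Finset.prod_pos fun j _ => by have := hpos j; positivity), ← ENNReal.ofReal_mul (by positivity)]
            congr 1
            have h0 := (hpos 0).ne'
            have h1 := (hpos 1).ne'
            have h2 := (hpos 2).ne'
            simp only [Fin.prod_univ_three]
            field_simp
            norm_num
          calc BB z * ‖f z‖ₑ ^ 2 * volume (polydisc 3 ∩ box φ z)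
              ≤ BB z * ‖f z‖ₑ ^ 2 * (C * ∏ i, ENNReal.ofReal ((1 - ‖z i‖) ^ 2)) := by gcongr; exact H z hz
            _ = C * (BB z * ∏ i, ENNReal.ofReal ((1 - ‖z i‖) ^ 2)) * ‖f z‖ₑ ^ 2 := by ring
            _ ≤ _ := by rw [e2]
        · have : ∀ x, k (x, z) = 0 := fun x => indicator_of_notMem (fun hh => hz hh.2.1) _
          simp [this]
    _ = _ := by
        rw [lintegral_indicator hPm, lintegral_const_mul' _ _ (by finiteness)]

end Good

lemma sqn (x : ℂ) : ENNReal.ofReal (‖x‖ ^ 2) = ‖x‖ₑ ^ 2 := by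
  rw [ENNReal.ofReal_pow (norm_nonneg _), ofReal_norm]

lemma Vbeta_zero : Vbeta 3 0 = ENNReal.ofReal ((1 / Real.pi) ^ 3) • volume.restrict (polydisc 3) := by
  unfold Vbeta
  simp only [zero_add, Real.rpow_zero, one_mul, Finset.prod_const, Finset.card_univ, Fintype.card_fin]
  rw [withDensity_const]

lemma bdd_iff (φ : (Fin 3 → ℂ) → (Fin 3 → ℂ)) : bddBergman 3 0 φ ↔ ∃ K : ℝ≥0∞, K ≠ ⊤ ∧
    ∀ f : (Fin 3 → ℂ) → ℂ, DifferentiableOn ℂ f (polydisc 3) →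
      ∫⁻ z in polydisc 3, ‖f (φ z)‖ₑ ^ 2 ≤ K * ∫⁻ z in polydisc 3, ‖f z‖ₑ ^ 2 := by
  have hpi := Real.pi_pos
  unfold bddBergman
  simp_rw [Vbeta_zero, lintegral_smul_measure, sqn, smul_eq_mul]
  set c := ENNReal.ofReal ((1 / Real.pi) ^ 3) with hc
  have hc0 : c ≠ 0 := by rw [hc, ENNReal.ofReal_ne_zero_iff]; positivity
  have hct : c ≠ ⊤ := ENNReal.ofReal_ne_top
  constructor
  · rintro ⟨C, hC, H⟩
    refine ⟨ENNReal.ofReal C, ENNReal.ofReal_ne_top, fun f hf => ?_⟩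
    have := H f hf
    rw [mul_left_comm] at this
    exact (ENNReal.mul_le_mul_iff_right hc0 hct).1 this
  · rintro ⟨K, hK, H⟩
    refine ⟨K.toReal + 1, by positivity, fun f hf => ?_⟩
    rw [mul_left_comm]
    gcongr c * ?_
    refine (H f hf).trans ?_
    gcongr
    rw [← ENNReal.ofReal_toReal hK]
    apply ENNReal.ofReal_le_ofReal
    rw [ENNReal.toReal_ofReal (by positivity)]
    linarith

end

section
lemma lmarg_prod (μ : Fin 3 → Measure ℂ) [∀ j, SigmaFinite (μ j)] (g : Fin 3 → ℂ → ℝ≥0∞) (hg : ∀ j, Measurable (g j))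
    (s : Finset (Fin 3)) : ∀ x : Fin 3 → ℂ, (∫⋯∫⁻_s, (fun x => ∏ j, g j (x j)) ∂μ) x =
      ∏ j, if j ∈ s then ∫⁻ z, g j z ∂(μ j) else g j (x j) := by
  have hG : Measurable (fun x : Fin 3 → ℂ => ∏ j, g j (x j)) :=
    Finset.measurable_prod _ fun j _ => (hg j).comp (measurable_pi_apply j)
  induction s using Finset.induction with
  | empty => intro x; simp
  | insert i s hi ih =>
    intro x
    rw [lmarginal_insert _ hG hi]
    simp_rw [ih]
    rw [← Finset.mul_prod_erase _ _ (Finset.mem_univ i)]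
    have e : ∀ y : ℂ, (∏ j, if j ∈ s then ∫⁻ z, g j z ∂(μ j) else g j (Function.update x i y j)) =
        g i y * ∏ j ∈ Finset.univ.erase i, if j ∈ insert i s then ∫⁻ z, g j z ∂(μ j) else g j (x j) := by
      intro y
      rw [← Finset.mul_prod_erase _ _ (Finset.mem_univ i)]
      congr 1
      · simp [hi]
      · apply Finset.prod_congr rfl
        intro j hj
        have hji : j ≠ i := Finset.ne_of_mem_erase hj
        simp [hji]
    simp_rw [e]
    rw [lintegral_mul_const _ (hg i)]
    simp

lemma pi_prod_int (g : Fin 3 → ℂ → ℝ≥0∞) (hg : ∀ j, Measurable (g j)) :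
    ∫⁻ z in polydisc 3, ∏ j, g j (z j) = ∏ j, ∫⁻ z in ball (0:ℂ) 1, g j z := by
  have := lmarg_prod (fun _ => volume.restrict (ball (0:ℂ) 1)) g hg Finset.univ 0
  rw [lmarginal_univ] at this
  simp only [Finset.mem_univ, if_true] at this
  rw [← Measure.restrict_pi_pi] at this
  have e : polydisc 3 = Set.pi Set.univ fun _ => ball (0:ℂ) 1 := by
    ext z; simp [polydisc]
  rw [e]
  exact this

lemma det_mul (c : ℂ) : (((ContinuousLinearMap.toSpanSingleton ℂ c).restrictScalars ℝ : ℂ →L[ℝ] ℂ)).det = ‖c‖ ^ 2 := by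
  simp only [ContinuousLinearMap.det]
  have : ((ContinuousLinearMap.toSpanSingleton ℂ c).restrictScalars ℝ : ℂ →ₗ[ℝ] ℂ) = LinearMap.restrictScalars ℝ (LinearMap.toSpanSingleton ℂ ℂ c) := by
    ext
    simp
  rw [this, LinearMap.det_restrictScalars]
  simp [Algebra.norm_complex_apply, Complex.normSq_eq_norm_sq]

lemma kernel_int {a : ℂ} {δ : ℝ} (hδ : 0 < δ) (hδ2 : δ ≤ 1 / 2) (ha : ‖a‖ = 1 - δ) :
    ∫⁻ z in ball (0:ℂ) 1, ‖((1 - a * z) ^ 2)⁻¹‖ₑ ^ 2 ≤ ENNReal.ofReal (4 * Real.pi / δ ^ 2) := by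
  have hpi := Real.pi_pos
  have ha0 : a ≠ 0 := by intro h; rw [h, norm_zero] at ha; linarith
  have hlow : ∀ z ∈ ball (0:ℂ) 1, δ ≤ ‖1 - a * z‖ := by
    intro z hz
    rw [mem_ball_zero_iff] at hz
    have := norm_sub_norm_le (1:ℂ) (a * z)
    rw [norm_one, norm_mul, ha] at this
    nlinarith [norm_nonneg z]
  have hne : ∀ z ∈ ball (0:ℂ) 1, 1 - a * z ≠ 0 := by
    intro z hz h
    have := hlow z hz
    rw [h, norm_zero] at this
    linarith
  have hder : ∀ z ∈ ball (0:ℂ) 1, HasDerivAt (fun z => (1 - a * z)⁻¹) (a / (1 - a * z) ^ 2) z := by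
    intro z hz
    have h1 : HasDerivAt (fun z => 1 - a * z) (-a) z := by
      simpa using ((hasDerivAt_id z).const_mul a).const_sub 1
    have := h1.fun_inv (hne z hz)
    rwa [neg_neg] at this
  have h1 := lintegral_abs_det_fderiv_eq_addHaar_image volume (s := ball (0:ℂ) 1) (f := fun z : ℂ => (1 - a * z)⁻¹)
    (f' := fun z => (ContinuousLinearMap.toSpanSingleton ℂ (a / (1 - a * z) ^ 2)).restrictScalars ℝ) measurableSet_ball
    (fun z hz => ((hder z hz).hasFDerivAt.restrictScalars ℝ).hasFDerivWithinAt) (by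
      intro z hz w hw hzw
      have := inv_injective hzw
      have h3 : a * z = a * w := by linear_combination -this
      exact mul_left_cancel₀ ha0 h3)
  have h2 : volume ((fun z : ℂ => (1 - a * z)⁻¹) '' ball (0:ℂ) 1) ≤ ENNReal.ofReal (Real.pi * (1 / δ) ^ 2) := by
    rw [← vol_cb 0 (by positivity)]
    apply measure_mono
    rintro _ ⟨z, hz, rfl⟩
    rw [mem_closedBall_zero_iff, norm_inv, ← one_div]
    exact one_div_le_one_div_of_le hδ (hlow z hz)
  calc ∫⁻ z in ball (0:ℂ) 1, ‖((1 - a * z) ^ 2)⁻¹‖ₑ ^ 2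
      ≤ ∫⁻ z in ball (0:ℂ) 1, ENNReal.ofReal 4 * ENNReal.ofReal |((ContinuousLinearMap.toSpanSingleton ℂ (a / (1 - a * z) ^ 2)).restrictScalars ℝ : ℂ →L[ℝ] ℂ).det| := by
        apply lintegral_mono
        intro z
        simp only
        rw [det_mul, ← sqn, ← ENNReal.ofReal_mul (by norm_num)]
        apply ENNReal.ofReal_le_ofReal
        rw [abs_of_nonneg (by positivity), div_eq_mul_inv, norm_mul, ha, mul_pow]
        have : 1 ≤ 4 * (1 - δ) ^ 2 := by nlinarith
        nlinarith [sq_nonneg ‖((1 - a * z) ^ 2)⁻¹‖]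
    _ = ENNReal.ofReal 4 * volume ((fun z : ℂ => (1 - a * z)⁻¹) '' ball (0:ℂ) 1) := by
        rw [lintegral_const_mul' _ _ ENNReal.ofReal_ne_top, h1]
    _ ≤ ENNReal.ofReal 4 * ENNReal.ofReal (Real.pi * (1 / δ) ^ 2) := by gcongr
    _ = _ := by
        rw [← ENNReal.ofReal_mul (by norm_num)]
        congr 1
        field_simp

end

section
namespace Good
variable {φ : (Fin 3 → ℂ) → (Fin 3 → ℂ)}

lemma base_pt (h : Good φ) {ζ z : Fin 3 → ℂ} (hζ : ζ ∈ closedPolydisc 3) (hz : z ∈ closedPolydisc 3) {i : Fin 3}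
    (hi : ‖φ ζ i‖ = 1) (S : Finset (Fin 3)) (hS : ∀ j ∈ S, jacEntry 3 φ ζ i j = 0) :
    S.piecewise z ζ ∈ closedPolydisc 3 ∧ φ (S.piecewise z ζ) i = φ ζ i ∧
      ∀ k, jacEntry 3 φ (S.piecewise z ζ) i k = jacEntry 3 φ ζ i k := by
  induction S using Finset.induction with
  | empty => simpa using hζ
  | insert j s hj ih =>
    obtain ⟨h1, h2, h3⟩ := ih (fun k hk => hS k (Finset.mem_insert_of_mem hk))
    have hi' : ‖φ (s.piecewise z ζ) i‖ = 1 := by rw [h2, hi]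
    have hc : ∀ l : ℂ, ‖l‖ ≤ 1 → φ (Function.update (s.piecewise z ζ) j l) i = φ (s.piecewise z ζ) i :=
      fun l hl => h.const_update h1 hi' (Or.inr (by rw [h3]; exact hS j (Finset.mem_insert_self _ _))) hl
    rw [Finset.piecewise_insert]
    refine ⟨update_mem h1 j (hz j), ?_, fun k => ?_⟩
    · rw [hc _ (hz j), h2]
    · rw [h.jac_update h1 hi' hc k (hz j), h3]

end Good

lemma test_diff (a : Fin 3 → ℂ) (ha : ∀ i, ‖a i‖ ≤ 1) :
    DifferentiableOn ℂ (fun z : Fin 3 → ℂ => ∏ i, ((1 - a i * z i) ^ 2)⁻¹) (polydisc 3) := by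
  have : (fun z : Fin 3 → ℂ => ∏ i, ((1 - a i * z i) ^ 2)⁻¹) = fun z => (∏ i, (1 - a i * z i) ^ 2)⁻¹ := by
    ext z; rw [Finset.prod_inv_distrib]
  rw [this]
  apply DifferentiableOn.inv
  · simp only [Fin.prod_univ_three]
    fun_prop
  · intro z hz
    rw [Finset.prod_ne_zero_iff]
    intro i _
    apply pow_ne_zero
    intro h0
    have h1 : a i * z i = 1 := by linear_combination -h0
    have h2 : ‖a i‖ * ‖z i‖ = 1 := by rw [← norm_mul, h1, norm_one]
    have := hz i
    nlinarith [ha i, norm_nonneg (a i), norm_nonneg (z i)]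

lemma test_int (a : Fin 3 → ℂ) {δ : ℝ} (hδ : 0 < δ) (hδ2 : δ ≤ 1 / 2) (I : Finset (Fin 3))
    (ha : ∀ i ∈ I, ‖a i‖ = 1 - δ) (ha' : ∀ i, i ∉ I → a i = 0) :
    ∫⁻ z in polydisc 3, ‖∏ i, ((1 - a i * z i) ^ 2)⁻¹‖ₑ ^ 2 ≤ ENNReal.ofReal ((4 * Real.pi) ^ 3 * ((δ ^ I.card) ^ 2)⁻¹) := by
  have hpi := Real.pi_pos
  have e : ∀ z : Fin 3 → ℂ, ‖∏ i, ((1 - a i * z i) ^ 2)⁻¹‖ₑ ^ 2 = ∏ i, ‖((1 - a i * z i) ^ 2)⁻¹‖ₑ ^ 2 := by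
    intro z
    rw [Finset.prod_pow]
    congr 1
    simp only [Fin.prod_univ_three, enorm_mul]
  simp_rw [e]
  rw [pi_prod_int (fun i z => ‖((1 - a i * z) ^ 2)⁻¹‖ₑ ^ 2)]
  · have hb : ∀ i, ∫⁻ z in ball (0:ℂ) 1, ‖((1 - a i * z) ^ 2)⁻¹‖ₑ ^ 2 ≤
        ENNReal.ofReal (4 * Real.pi * ((if i ∈ I then δ else 1) ^ 2)⁻¹) := by
      intro i
      by_cases hi : i ∈ I
      · simp only [hi, if_true]
        refine (kernel_int hδ hδ2 (ha i hi)).trans (le_of_eq ?_)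
        rw [div_eq_mul_inv]
      · simp only [hi, if_false, ha' i hi]
        simp only [zero_mul, sub_zero, one_pow, inv_one, enorm_one, mul_one, lintegral_const, one_mul,
          Measure.restrict_apply_univ]
        rw [vol_b _ zero_le_one]
        exact ENNReal.ofReal_le_ofReal (by nlinarith)
    calc _ ≤ ∏ i, ENNReal.ofReal (4 * Real.pi * ((if i ∈ I then δ else 1) ^ 2)⁻¹) :=
          Finset.prod_le_prod' fun i _ => hb i
      _ = _ := by
        rw [← ENNReal.ofReal_prod_of_nonneg (fun i _ => by positivity)]
        congr 1
        rw [Finset.prod_mul_distrib, Finset.prod_inv_distrib, Finset.prod_pow]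
        simp
  · intro j
    fun_prop

end

section
lemma center_norm {δ s : ℝ} (hδ : 0 < δ) (hδ1 : δ ≤ 1 / 2) (hs : δ * (3 + s ^ 2) < 2) :
    ‖(1 : ℂ) - 2 * δ - s * δ * Complex.I‖ ≤ 1 - δ := by
  have e : (1 : ℂ) - 2 * δ - s * δ * Complex.I = ((1 - 2 * δ : ℝ) : ℂ) + ((-(s * δ) : ℝ) : ℂ) * Complex.I := by
    push_cast; ring
  rw [e, Complex.norm_add_mul_I, Real.sqrt_le_left (by linarith)]
  nlinarith

namespace Good
variable {φ : (Fin 3 → ℂ) → (Fin 3 → ℂ)}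

lemma nec_geom (h : Good φ) {ζ : Fin 3 → ℂ} (hζ : ζ ∈ torus 3) (I J : Finset (Fin 3))
    (hI : ∀ i ∈ I, ‖φ ζ i‖ = 1) (v : Fin 3 → ℝ)
    (hker : ∀ i ∈ I, ∑ j ∈ J, jacEntry 3 φ ζ i j * ζ j * v j = 0)
    (hJ : ∀ i ∈ I, ∀ j, j ∉ J → jacEntry 3 φ ζ i j = 0) :
    ∃ D > (0:ℝ), ∀ N : ℕ, ∃ δ > (0:ℝ), δ ≤ 1 / 2 ∧ ∀ m : ℕ, m < N → ∀ z : Fin 3 → ℂ,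
      (∀ j, z j ∈ ball (if j ∈ J then ζ j * (1 - 2 * δ - (2 * m * v j : ℝ) * δ * Complex.I) else 0) (if j ∈ J then δ else 1)) →
        z ∈ polydisc 3 ∧ ∀ i ∈ I, ‖φ z i - φ ζ i‖ ≤ D * δ := by
  have hζc : ζ ∈ closedPolydisc 3 := torus_subset hζ
  set R : ℝ := ∑ i, ∑ j, ‖jacEntry 3 φ ζ i j‖ with hR
  have hR0 : 0 ≤ R := by positivity
  set V : ℝ := ∑ j, |v j| with hV
  have hV0 : 0 ≤ V := by positivity
  have hVj : ∀ j, |v j| ≤ V := fun j => Finset.single_le_sum (f := fun j => |v j|) (fun _ _ => abs_nonneg _) (Finset.mem_univ j)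
  refine ⟨3 * R + 1, by positivity, fun N => ?_⟩
  set Q : ℝ := 3 + 2 * N * V + (2 * N * V) ^ 2 with hQ
  have hNV : 0 ≤ 2 * N * V := by positivity
  have hQ3 : 3 ≤ Q := by nlinarith
  obtain ⟨δ₀, hδ₀, H⟩ := h.unif_comp (ε := 1 / Q) (by positivity)
  set δ := min (1 / Q) (δ₀ / (2 * Q)) with hδ
  have hδpos : 0 < δ := lt_min (by positivity) (by positivity)
  have hδQ : δ * Q ≤ 1 := by
    have : δ ≤ 1 / Q := min_le_left _ _
    rwa [le_div_iff₀ (by positivity)] at this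
  have hδQ2 : δ * Q < δ₀ := by
    have : δ ≤ δ₀ / (2 * Q) := min_le_right _ _
    rw [le_div_iff₀ (by positivity)] at this
    nlinarith
  have hδ2 : δ ≤ 1 / 2 := by nlinarith
  refine ⟨δ, hδpos, hδ2, fun m hm z hz => ?_⟩
  have hms : ∀ j, |2 * m * v j| ≤ 2 * N * V := by
    intro j
    rw [abs_mul, abs_of_nonneg (by positivity : (0:ℝ) ≤ 2 * m)]
    have : (m:ℝ) ≤ N := by exact_mod_cast hm.le
    exact mul_le_mul (by linarith) (hVj j) (abs_nonneg _) (by positivity)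
  have hdisp : ∀ j ∈ J, ∃ η : ℂ, ‖η‖ ≤ 1 ∧ z j = ζ j * (1 - 2 * δ - (2 * m * v j : ℝ) * δ * Complex.I) + δ * η := by
    intro j hj
    have h1 := hz j
    simp only [hj, if_true] at h1
    rw [mem_ball_iff_norm] at h1
    refine ⟨(z j - ζ j * (1 - 2 * δ - (2 * m * v j : ℝ) * δ * Complex.I)) / δ, ?_, ?_⟩
    · rw [norm_div, Complex.norm_real, Real.norm_of_nonneg hδpos.le, div_le_one hδpos]
      exact h1.le
    · have : (δ:ℂ) ≠ 0 := by exact_mod_cast hδpos.ne'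
      field_simp
      ring
  have hzP : z ∈ polydisc 3 := by
    intro j
    have h1 := hz j
    by_cases hj : j ∈ J
    · simp only [hj, if_true] at h1
      rw [mem_ball_iff_norm] at h1
      have h2 := norm_sub_norm_le (z j) (ζ j * (1 - 2 * δ - (2 * m * v j : ℝ) * δ * Complex.I))
      have h3 := center_norm (s := 2 * m * v j) hδpos hδ2 (by
        have : (2 * m * v j) ^ 2 ≤ (2 * N * V) ^ 2 := by
          rw [← sq_abs]; exact pow_le_pow_left₀ (abs_nonneg _) (hms j) 2
        nlinarith)
      rw [norm_mul, hζ j, one_mul] at h2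
      linarith
    · simpa [hj] using h1
  refine ⟨hzP, fun i hi => ?_⟩
  have hzc := pd_subset hzP
  obtain ⟨b1, b2, b3⟩ := h.base_pt hζc hzc (hI i hi) Jᶜ (fun j hj => hJ i hi j (Finset.mem_compl.1 hj))
  set x := Jᶜ.piecewise z ζ with hx
  have hzx : ∀ j, (z - x) j = if j ∈ J then z j - ζ j else 0 := by
    intro j
    by_cases hj : j ∈ J <;> simp [hx, hj]
  choose! η hη hzη using hdisp
  have hzζ : ∀ j ∈ J, z j - ζ j = -(2 * δ * ζ j) - 2 * m * δ * Complex.I * (ζ j * v j) + δ * η j := by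
    intro j hj
    rw [hzη j hj]; push_cast; ring
  have hnorm : ‖z - x‖ ≤ δ * Q := by
    rw [pi_norm_le_iff_of_nonneg (by positivity)]
    intro j
    rw [hzx]
    split_ifs with hj
    · rw [hzη j hj]
      have e : ζ j * (1 - 2 * δ - (2 * m * v j : ℝ) * δ * Complex.I) + δ * η j - ζ j =
        (δ:ℂ) * (-(2 * ζ j) - ζ j * (2 * m * v j : ℝ) * Complex.I + η j) := by ring
      rw [e, norm_mul, Complex.norm_real, Real.norm_of_nonneg hδpos.le]
      apply mul_le_mul_of_nonneg_left _ hδpos.le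
      have n1 : ‖-(2 * ζ j)‖ = 2 := by rw [norm_neg, norm_mul, hζ j]; simp
      have n2 : ‖ζ j * ((2 * m * v j : ℝ) : ℂ) * Complex.I‖ ≤ 2 * N * V := by
        rw [norm_mul, norm_mul, hζ j, Complex.norm_I, one_mul, mul_one, Complex.norm_real]
        exact hms j
      have n3 := norm_add_le (-(2 * ζ j) - ζ j * (2 * m * v j : ℝ) * Complex.I) (η j)
      have n4 := norm_sub_le (-(2 * ζ j)) (ζ j * (2 * m * v j : ℝ) * Complex.I)
      have := hη j hj
      nlinarith
    · rw [norm_zero]; positivity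
  have key := H x b1 z hzc (hnorm.trans_lt hδQ2) i
  rw [b2] at key
  have hD : DD φ x (z - x) i = δ * ∑ j ∈ J, jacEntry 3 φ ζ i j * (-(2 * ζ j) + η j) := by
    rw [h.D_apply b1]
    simp_rw [b3, hzx, mul_ite, mul_zero]
    rw [Finset.sum_ite_mem, Finset.univ_inter]
    have : ∀ j ∈ J, jacEntry 3 φ ζ i j * (z j - ζ j) = δ * (jacEntry 3 φ ζ i j * (-(2 * ζ j) + η j)) -
        2 * m * δ * Complex.I * (jacEntry 3 φ ζ i j * ζ j * v j) := by
      intro j hj; rw [hzζ j hj]; ring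
    rw [Finset.sum_congr rfl this, Finset.sum_sub_distrib, ← Finset.mul_sum, ← Finset.mul_sum, hker i hi]
    ring
  have hDn : ‖DD φ x (z - x) i‖ ≤ δ * (3 * R) := by
    rw [hD, norm_mul, Complex.norm_real, Real.norm_of_nonneg hδpos.le]
    apply mul_le_mul_of_nonneg_left _ hδpos.le
    calc ‖∑ j ∈ J, jacEntry 3 φ ζ i j * (-(2 * ζ j) + η j)‖ ≤ ∑ j ∈ J, ‖jacEntry 3 φ ζ i j‖ * 3 := by
          apply norm_sum_le_of_le
          intro j hj
          rw [norm_mul]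
          apply mul_le_mul_of_nonneg_left _ (norm_nonneg _)
          have n1 : ‖-(2 * ζ j)‖ = 2 := by rw [norm_neg, norm_mul, hζ j]; simp
          have n3 := norm_add_le (-(2 * ζ j)) (η j)
          linarith [hη j hj]
      _ ≤ ∑ j, ‖jacEntry 3 φ ζ i j‖ * 3 :=
          Finset.sum_le_sum_of_subset_of_nonneg (Finset.subset_univ _) (fun _ _ _ => by positivity)
      _ = 3 * ∑ j, ‖jacEntry 3 φ ζ i j‖ := by rw [← Finset.sum_mul, mul_comm]
      _ ≤ 3 * R := by
          gcongr
          exact Finset.single_le_sum (f := fun i => ∑ j, ‖jacEntry 3 φ ζ i j‖) (fun i _ => by positivity) (Finset.mem_univ i)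
  have hε : 1 / Q * ‖z - x‖ ≤ δ := by
    rw [one_div, inv_mul_le_iff₀ (by positivity), mul_comm]; exact hnorm
  have tri := norm_add_le (φ z i - φ ζ i - DD φ x (z - x) i) (DD φ x (z - x) i)
  rw [sub_add_cancel] at tri
  linarith

end Good

end

section
lemma test_lower {a w : Fin 3 → ℂ} {T : ℝ} (I : Finset (Fin 3)) (hT : 0 < T)
    (ha : ∀ i ∈ I, ‖1 - a i * w i‖ ≤ T) (hne : ∀ i, 1 - a i * w i ≠ 0) (ha' : ∀ i, i ∉ I → a i = 0) :
    ENNReal.ofReal (((T ^ I.card) ^ 4)⁻¹) ≤ ‖∏ i, ((1 - a i * w i) ^ 2)⁻¹‖ₑ ^ 2 := by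
  rw [← sqn]
  apply ENNReal.ofReal_le_ofReal
  have h1 : ((T ^ I.card) ^ 2)⁻¹ ≤ ‖∏ i, ((1 - a i * w i) ^ 2)⁻¹‖ := by
    rw [norm_prod]
    calc ((T ^ I.card) ^ 2)⁻¹ = ∏ i : Fin 3, ((if i ∈ I then T else 1) ^ 2)⁻¹ := by
          rw [Finset.prod_inv_distrib, Finset.prod_pow]
          simp
      _ ≤ _ := by
        apply Finset.prod_le_prod
        · intro i _; positivity
        · intro i _
          rw [norm_inv, norm_pow]
          have hp : 0 < ‖1 - a i * w i‖ := norm_pos_iff.2 (hne i)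
          apply inv_anti₀ (by positivity)
          by_cases hi : i ∈ I
          · simp only [hi, if_true]
            exact pow_le_pow_left₀ hp.le (ha i hi) 2
          · simp [hi, ha' i hi]
  calc ((T ^ I.card) ^ 4)⁻¹ = (((T ^ I.card) ^ 2)⁻¹) ^ 2 := by rw [inv_pow, ← pow_mul _ 2 2]
    _ ≤ _ := pow_le_pow_left₀ (by positivity) h1 2

namespace Good
variable {φ : (Fin 3 → ℂ) → (Fin 3 → ℂ)}

lemma nec_core (h : Good φ) {ζ : Fin 3 → ℂ} (hζ : ζ ∈ torus 3) (I J : Finset (Fin 3)) (hIJ : I.card = J.card)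
    (hI : ∀ i ∈ I, ‖φ ζ i‖ = 1) (v : Fin 3 → ℝ)
    (hker : ∀ i ∈ I, ∑ j ∈ J, jacEntry 3 φ ζ i j * ζ j * v j = 0)
    (hJ : ∀ i ∈ I, ∀ j, j ∉ J → jacEntry 3 φ ζ i j = 0) {j₀ : Fin 3} (hj₀ : j₀ ∈ J) (hv : 1 ≤ |v j₀|)
    (hb : bddBergman 3 0 φ) : False := by
  obtain ⟨K, hK, hb⟩ := (bdd_iff φ).1 hb
  obtain ⟨D, hD, H⟩ := h.nec_geom hζ I J hI v hker hJ
  have hpi := Real.pi_pos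
  set k := I.card with hk
  obtain ⟨N, hN⟩ := exists_nat_gt (K.toReal * (64 * ((D + 1) ^ k) ^ 4))
  obtain ⟨δ, hδ, hδ2, H⟩ := H N
  set c : ℕ → Fin 3 → ℂ := fun m j => if j ∈ J then ζ j * (1 - 2 * δ - (2 * m * v j : ℝ) * δ * Complex.I) else 0 with hc
  set r : Fin 3 → ℝ := fun j => if j ∈ J then δ else 1 with hr
  have hr0 : ∀ j, 0 ≤ r j := by
    intro j; simp only [hr]; split_ifs <;> linarith
  set E : ℕ → Set (Fin 3 → ℂ) := fun m => Set.pi univ fun j => ball (c m j) (r j) with hE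
  have hmem : ∀ m < N, ∀ z ∈ E m, z ∈ polydisc 3 ∧ ∀ i ∈ I, ‖φ z i - φ ζ i‖ ≤ D * δ :=
    fun m hm z hz => H m hm z fun j => hz j (mem_univ j)
  have hEm : ∀ m, MeasurableSet (E m) := fun m => MeasurableSet.univ_pi fun j => measurableSet_ball
  have hvol : ∀ m, volume (E m) = ENNReal.ofReal (Real.pi ^ 3 * (δ ^ k) ^ 2) := by
    intro m
    rw [hE, volume_pi_pi]
    simp_rw [fun j => vol_b (c m j) (hr0 j)]
    rw [← ENNReal.ofReal_prod_of_nonneg (fun i _ => by positivity), Finset.prod_mul_distrib, Finset.prod_pow]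
    congr 1
    rw [hIJ]
    simp [hr]
  have hdisj : ∀ m m' : ℕ, m ≠ m' → Disjoint (E m) (E m') := by
    intro m m' hmm
    rw [Set.disjoint_left]
    intro z hz hz'
    have h1 : z j₀ ∈ ball (c m j₀) (r j₀) := hz j₀ (mem_univ _)
    have h2 : z j₀ ∈ ball (c m' j₀) (r j₀) := hz' j₀ (mem_univ _)
    have hrj : r j₀ = δ := by simp [hr, hj₀]
    rw [hrj] at h1 h2
    have h3 : dist (c m j₀) (c m' j₀) < 2 * δ := by
      have := dist_triangle_left (c m j₀) (c m' j₀) (z j₀)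
      rw [mem_ball] at h1 h2
      linarith
    have h4 : c m j₀ - c m' j₀ = ζ j₀ * (((-2 * δ * v j₀ * ((m:ℝ) - m') : ℝ) : ℂ) * Complex.I) := by
      simp only [hc, hj₀, if_true]
      push_cast
      ring
    rw [dist_eq_norm, h4, norm_mul, hζ j₀, norm_mul, Complex.norm_I, Complex.norm_real, Real.norm_eq_abs,
      abs_mul, abs_mul, abs_mul, abs_of_pos hδ] at h3
    have h5 : (1:ℝ) ≤ |(m:ℝ) - m'| := by
      have : (1:ℤ) ≤ |(m:ℤ) - m'| := Int.one_le_abs (by omega)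
      exact_mod_cast this
    have h6 : 1 ≤ |v j₀| * |(m:ℝ) - m'| := by nlinarith
    simp only [abs_neg, Nat.abs_ofNat] at h3
    nlinarith
  set a : Fin 3 → ℂ := fun i => if i ∈ I then (1 - δ : ℝ) * (starRingEnd ℂ) (φ ζ i) else 0 with ha
  have haI : ∀ i ∈ I, ‖a i‖ = 1 - δ := by
    intro i hi
    simp only [ha, hi, if_true]
    rw [norm_mul, RCLike.norm_conj, hI i hi, Complex.norm_real, Real.norm_of_nonneg (by linarith), mul_one]
  have haI' : ∀ i, i ∉ I → a i = 0 := by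
    intro i hi; simp [ha, hi]
  have ha1 : ∀ i, ‖a i‖ ≤ 1 := by
    intro i
    by_cases hi : i ∈ I
    · rw [haI i hi]; linarith
    · rw [haI' i hi]; simp
  have hmain := hb _ (test_diff a ha1)
  have hup := test_int a hδ hδ2 I haI haI'
  set T := (D + 1) * δ with hT
  have hTpos : 0 < T := by positivity
  have hlow : ∀ m < N, ∀ z ∈ E m, ENNReal.ofReal (((T ^ k) ^ 4)⁻¹) ≤ ‖∏ i, ((1 - a i * φ z i) ^ 2)⁻¹‖ₑ ^ 2 := by
    intro m hm z hz
    obtain ⟨hzP, hzI⟩ := hmem m hm z hz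
    refine test_lower I hTpos ?_ ?_ haI'
    · intro i hi
      have e1 : (starRingEnd ℂ) (φ ζ i) * φ ζ i = 1 := by
        rw [mul_comm, Complex.mul_conj, Complex.normSq_eq_norm_sq, hI i hi]; simp
      have e2 : 1 - a i * φ z i = (δ : ℂ) - ((1 - δ : ℝ) : ℂ) * (starRingEnd ℂ) (φ ζ i) * (φ z i - φ ζ i) := by
        simp only [ha, hi, if_true]
        push_cast
        linear_combination -(1 - (δ:ℂ)) * e1
      rw [e2]
      refine (norm_sub_le _ _).trans ?_
      rw [norm_mul, norm_mul, RCLike.norm_conj, hI i hi, Complex.norm_real, Complex.norm_real,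
        Real.norm_of_nonneg (by linarith), Real.norm_of_nonneg (by linarith)]
      have := hzI i hi
      have h0 := norm_nonneg (φ z i - φ ζ i)
      nlinarith
    · intro i h0
      have h1 : a i * φ z i = 1 := by linear_combination -h0
      have h2 : ‖a i‖ * ‖φ z i‖ = 1 := by rw [← norm_mul, h1, norm_one]
      have := h.map z hzP i
      nlinarith [ha1 i, norm_nonneg (a i), norm_nonneg (φ z i)]
  have hsum : (N : ℝ≥0∞) * (ENNReal.ofReal (((T ^ k) ^ 4)⁻¹) * ENNReal.ofReal (Real.pi ^ 3 * (δ ^ k) ^ 2)) ≤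
      ∫⁻ z in polydisc 3, ‖∏ i, ((1 - a i * φ z i) ^ 2)⁻¹‖ₑ ^ 2 := by
    have hsub : (⋃ m ∈ Finset.range N, E m) ⊆ polydisc 3 := by
      intro z hz
      simp only [mem_iUnion, Finset.mem_range] at hz
      obtain ⟨m, hm, hz⟩ := hz
      exact (hmem m hm z hz).1
    refine le_trans ?_ (lintegral_mono_set hsub)
    rw [lintegral_biUnion_finset (fun m _ m' _ hmm => hdisj m m' hmm) (fun m _ => hEm m)]
    calc _ = ∑ m ∈ Finset.range N, ENNReal.ofReal (((T ^ k) ^ 4)⁻¹) * volume (E m) := by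
          simp [hvol]
      _ ≤ _ := by
        apply Finset.sum_le_sum
        intro m hm
        rw [← setLIntegral_const]
        exact setLIntegral_mono' (hEm m) (hlow m (Finset.mem_range.1 hm))
  have hfin := (hsum.trans hmain).trans (mul_le_mul_right hup K)
  rw [← ENNReal.ofReal_toReal hK, ← ENNReal.ofReal_natCast, ← ENNReal.ofReal_mul (by positivity), ← ENNReal.ofReal_mul (by positivity),
    ← ENNReal.ofReal_mul (by positivity), ENNReal.ofReal_le_ofReal_iff (by positivity)] at hfin
  have e1 : (N:ℝ) * (((T ^ k) ^ 4)⁻¹ * (Real.pi ^ 3 * (δ ^ k) ^ 2)) =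
      N * (((D + 1) ^ k) ^ 4)⁻¹ * (Real.pi ^ 3 * ((δ ^ k) ^ 2)⁻¹) := by
    rw [hT, mul_pow]
    have : δ ^ k ≠ 0 := by positivity
    have : (D+1) ^ k ≠ 0 := by positivity
    field_simp
  rw [e1] at hfin
  have e2 : K.toReal * ((4 * Real.pi) ^ 3 * ((δ ^ k) ^ 2)⁻¹) = K.toReal * 64 * (Real.pi ^ 3 * ((δ ^ k) ^ 2)⁻¹) := by ring
  rw [e2] at hfin
  have hfin2 := le_of_mul_le_mul_right hfin (by positivity)
  rw [← div_eq_mul_inv, div_le_iff₀ (by positivity)] at hfin2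
  linarith

lemma nec_core' (h : Good φ) {ζ : Fin 3 → ℂ} (hζ : ζ ∈ torus 3) (I J : Finset (Fin 3)) (hIJ : I.card = J.card)
    (hI : ∀ i ∈ I, ‖φ ζ i‖ = 1) (v : Fin 3 → ℝ)
    (hker : ∀ i ∈ I, ∑ j ∈ J, jacEntry 3 φ ζ i j * ζ j * v j = 0)
    (hJ : ∀ i ∈ I, ∀ j, j ∉ J → jacEntry 3 φ ζ i j = 0) {j₀ : Fin 3} (hj₀ : j₀ ∈ J) (hv : v j₀ ≠ 0)
    (hb : bddBergman 3 0 φ) : False := by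
  refine h.nec_core hζ I J hIJ hI (fun j => (v j₀)⁻¹ * v j) ?_ hJ hj₀ (by simp [hv]) hb
  intro i hi
  have := hker i hi
  calc _ = ((v j₀)⁻¹ : ℂ) * ∑ j ∈ J, jacEntry 3 φ ζ i j * ζ j * v j := by
        rw [Finset.mul_sum]
        apply Finset.sum_congr rfl
        intro j _
        push_cast; ring
    _ = 0 := by rw [this, mul_zero]

lemma conj_cancel {w x : ℂ} (hw : ‖w‖ = 1) (hx : (starRingEnd ℂ) w * x = 0) : x = 0 := by
  rcases mul_eq_zero.1 hx with h | h
  · rw [map_eq_zero] at h; simp [h] at hw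
  · exact h

lemma nec_one (h : Good φ) (hb : bddBergman 3 0 φ) : ∀ ζ ∈ torus 3, φ ζ ∈ torus 3 →
    Matrix.det (Matrix.of fun i j => jacEntry 3 φ ζ i j) ≠ 0 := by
  intro ζ hζ hφ hdet
  choose A hA0 hA using fun i j => h.bd_nonneg (torus_subset hζ) (hφ i) (hζ j)
  have e : (Matrix.of A).map (algebraMap ℝ ℂ) =
      Matrix.diagonal (fun i => (starRingEnd ℂ) (φ ζ i)) * (Matrix.of fun i j => jacEntry 3 φ ζ i j) * Matrix.diagonal ζ := by
    ext i j
    simp [Matrix.mul_diagonal, Matrix.diagonal_mul, ← hA]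
  have hd : ((Matrix.of A).det : ℂ) = 0 := by
    have := RingHom.map_det (algebraMap ℝ ℂ) (Matrix.of A)
    rw [RingHom.mapMatrix_apply, e, Matrix.det_mul, Matrix.det_mul, hdet] at this
    simpa using this
  obtain ⟨v, hv0, hv⟩ := Matrix.exists_mulVec_eq_zero_iff.2 (Complex.ofReal_eq_zero.1 hd)
  obtain ⟨j₀, hj₀⟩ := Function.ne_iff.1 hv0
  refine h.nec_core' hζ Finset.univ Finset.univ rfl (fun i _ => hφ i) v ?_ (by simp) (Finset.mem_univ j₀) hj₀ hb
  intro i _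
  apply conj_cancel (hφ i)
  have := congrFun hv i
  simp only [Matrix.mulVec, dotProduct, Matrix.of_apply, Pi.zero_apply] at this
  have h2 : ((∑ j, A i j * v j : ℝ) : ℂ) = 0 := by rw [this]; simp
  push_cast at h2
  rw [← h2, Finset.mul_sum]
  apply Finset.sum_congr rfl
  intro j _
  rw [← hA]; ring

lemma nec_two (h : Good φ) (hb : bddBergman 3 0 φ) : ∀ i₁ i₂ : Fin 3, i₁ < i₂ → ∀ ζ ∈ torus 3, ‖φ ζ i₁‖ = 1 → ‖φ ζ i₂‖ = 1 →
    (LinearIndependent ℂ ![fun j => jacEntry 3 φ ζ i₁ j, fun j => jacEntry 3 φ ζ i₂ j] ∨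
      ∀ j : Fin 3, jacEntry 3 φ ζ i₁ j ≠ 0 ∧ jacEntry 3 φ ζ i₂ j ≠ 0) := by
  intro i₁ i₂ hlt ζ hζ h1 h2
  by_contra hcon
  rw [not_or] at hcon
  obtain ⟨hLI, hz⟩ := hcon
  have hζc := torus_subset hζ
  obtain ⟨k₁, hk₁⟩ := h.grad_ne hζc h1
  obtain ⟨k₂, hk₂⟩ := h.grad_ne hζc h2
  have hr1 : (fun j => jacEntry 3 φ ζ i₁ j) ≠ 0 := fun h0 => hk₁ (congrFun h0 k₁)
  have hpar : ∃ s : ℂ, ∀ j, jacEntry 3 φ ζ i₂ j = s * jacEntry 3 φ ζ i₁ j := by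
    by_contra hn
    apply hLI
    rw [LinearIndependent.pair_iff' hr1]
    intro s hs
    exact hn ⟨s, fun j => by rw [← congrFun hs j]; rfl⟩
  obtain ⟨s, hs⟩ := hpar
  have hs0 : s ≠ 0 := by
    rintro rfl; exact hk₂ (by rw [hs]; simp)
  have hz' : ∃ j, jacEntry 3 φ ζ i₁ j = 0 := by
    by_contra hn
    push Not at hn
    exact hz fun j => ⟨hn j, by rw [hs]; exact mul_ne_zero hs0 (hn j)⟩
  obtain ⟨j, hj⟩ := hz'
  have hkj : k₁ ≠ j := by rintro rfl; exact hk₁ hj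
  obtain ⟨q, hq⟩ : ∃ q, q ≠ k₁ ∧ q ≠ j ∧ ∀ l, l ≠ j → l = k₁ ∨ l = q := by
    revert hkj; clear * -; revert k₁ j; decide
  obtain ⟨hqk, hqj, hall⟩ := hq
  choose A hA0 hA using fun j => h.bd_nonneg hζc h1 (hζ j)
  have hAk : A k₁ ≠ 0 := by
    intro h0
    have := hA k₁
    rw [h0, mul_assoc, Complex.ofReal_zero] at this
    have := conj_cancel h1 this
    rcases mul_eq_zero.1 this with h3 | h3
    · exact hk₁ h3
    · have := hζ k₁; rw [h3] at this; simp at this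
  have hker1 : jacEntry 3 φ ζ i₁ k₁ * ζ k₁ * ((A q : ℝ) : ℂ) + jacEntry 3 φ ζ i₁ q * ζ q * ((-A k₁ : ℝ) : ℂ) = 0 := by
    push_cast
    rw [← hA, ← hA]; ring
  refine h.nec_core' hζ {i₁, i₂} {k₁, q} ?_ ?_ (fun l => if l = k₁ then A q else -A k₁) ?_ ?_ (j₀ := q) (by simp) ?_ hb
  · rw [Finset.card_pair hlt.ne, Finset.card_pair hqk.symm]
  · intro i hi
    simp only [Finset.mem_insert, Finset.mem_singleton] at hi
    rcases hi with rfl | rfl <;> assumption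
  · intro i hi
    rw [Finset.sum_pair hqk.symm]
    simp only [Finset.mem_insert, Finset.mem_singleton] at hi
    simp only [if_true, hqk, if_false]
    rcases hi with rfl | rfl
    · exact hker1
    · rw [hs, hs]; linear_combination s * hker1
  · intro i hi l hl
    simp only [Finset.mem_insert, Finset.mem_singleton] at hi hl
    have : l = j := by
      by_contra hlj
      exact hl (hall l hlj)
    subst this
    rcases hi with rfl | rfl
    · exact hj
    · rw [hs, hj, mul_zero]
  · simpa [hqk] using hAk

end Good

end

theorem tridisc_bergman_criterion (φ : (Fin 3 → ℂ) → (Fin 3 → ℂ))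
    (hhol : DifferentiableOn ℂ φ (polydisc 3))
    (hsm : ContDiffOn ℝ 2 φ (closedPolydisc 3))
    (hmap : ∀ z ∈ polydisc 3, φ z ∈ polydisc 3) :
    bddBergman 3 0 φ ↔
      ((∀ ζ ∈ torus 3, φ ζ ∈ torus 3 →
          Matrix.det (Matrix.of fun i j => jacEntry 3 φ ζ i j) ≠ 0) ∧
        (∀ i₁ i₂ : Fin 3, i₁ < i₂ → ∀ ζ ∈ torus 3, ‖φ ζ i₁‖ = 1 → ‖φ ζ i₂‖ = 1 →
          (LinearIndependent ℂ
              ![fun j => jacEntry 3 φ ζ i₁ j, fun j => jacEntry 3 φ ζ i₂ j] ∨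
            ∀ j : Fin 3, jacEntry 3 φ ζ i₁ j ≠ 0 ∧ jacEntry 3 φ ζ i₂ j ≠ 0))) := by
  have h : Good φ := ⟨hhol, hsm, hmap⟩
  constructor
  · intro hb
    exact ⟨h.nec_one hb, h.nec_two hb⟩
  · rintro ⟨h1, h2⟩
    exact (bdd_iff φ).2 (h.carleson (h.global_VB h1 h2))

end
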